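/- arXiv:1908.04375 — 2 statements merged into one kernel-verified Lean document; each statement's English description precedes it below -/
import Mathlib

section
/- Let κ be a regular uncountable cardinal and λ ≥ κ. Suppose that κ is mildly λ-ineffable and cf(λ) ≠ κ. Then cov(λ, κ^+, κ^+, κ) = λ. -/
/-!
The lower bound is a counting argument: a covering family has union `λ`, and its members have size
at most `κ < λ` (the case `λ = κ` is excluded by `cf(λ) ≠ κ`).

For the upper bound, `covLe_induction` shows by induction on `μ` with `κ ≤ μ ≤ λ` that the covering
number `cov(μ, κ⁺, κ⁺, κ)` is at most `μ⁺`, and at most `μ` if `cf(μ) ≠ κ`. If `cf(μ) > κ`, sets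
of size `κ` are bounded in `μ`; if `cf(μ) < κ`, they are unions of fewer than `κ` bounded sets; and
bounded sets are dealt with by the induction hypothesis (`CovLe.of_cof_ne`).

The case `cf(μ) = κ < μ` (`CovLe.of_cof_eq`) is the heart of the matter and uses two ingredients.

* Mild ineffability gives, for regular `θ` with `κ < θ ≤ λ`, a cofinal subset of `P_κ(θ)` of size
  `θ` (`exists_cofinal_family`). This is Solovay's argument with a partial `κ`-complete
  ultrafilter. Hence a set `a ⊆ μ` of size `κ`, being an increasing union of `κ` small sets, can
  be coded by a function `f` on `κ` with `f i < |o i|⁺`, where `o` is a continuous cofinal sequence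
  in `μ`.
* Shelah's pcf theory gives a sequence `g` of `μ⁺` functions on `κ`, bounded by the same `|o i|⁺`
  and increasing modulo bounded sets, such that every unbounded set of indices contains `κ⁺` of
  them along which `g` is increasing beyond indices attached to the single points
  (`exists_increasing`, `exists_good_subset`). The latter is based on club guessing
  (`club_guessing`) at `κ⁺⁺⁺`, which lies below the singular cardinal `μ`.

If `f ≤ g α` on a stationary set for some `α < μ⁺`, then `a` can be recovered up to a covering from
`α` and one set from a family covering the bounded subsets of `μ`, so that `μ⁺` sets suffice. If
there is no such `α`, then every `g α` lies below `f` on a club, and the properties of `g` produce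
`κ⁺` ordinals inside a set of size `κ`.
-/

set_option autoImplicit false

noncomputable section

open Cardinal Set

universe u

/-- `P_κ(λ)`: the collection of subsets of (the set of ordinals below) `λ`
of cardinality `< κ`. -/
def Pkl (κ lam : Cardinal.{0}) : Set (Set Ordinal.{0}) :=
  {a | a ⊆ Set.Iio lam.ord ∧ #a < Cardinal.lift.{1} κ}

/-- `J` is an ideal on the set `X`. -/
structure IsIdealOn {α : Type u} (J : Set (Set α)) (X : Set α) : Prop where
  empty_mem : ∅ ∈ J
  subset_ground : ∀ A ∈ J, A ⊆ X
  union_mem : ∀ A ∈ J, ∀ B ∈ J, A ∪ B ∈ J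
  mem_of_subset : ∀ A ∈ J, ∀ B, B ⊆ A → B ∈ J
  ground_not_mem : X ∉ J

/-- `J⁺`: the `J`-positive subsets of the ground set `X`. -/
def plusOf {α : Type u} (J : Set (Set α)) (X : Set α) : Set (Set α) :=
  {A | A ⊆ X ∧ A ∉ J}

/-- The restriction `J | A` of an ideal `J` with ground set `X`. -/
def restr {α : Type u} (J : Set (Set α)) (X A : Set α) : Set (Set α) :=
  {B | B ⊆ X ∧ B ∩ A ∈ J}

/-- The ideal `I_{κ,λ}` of noncofinal subsets of `P_κ(λ)`. -/
def Ikl (κ lam : Cardinal.{0}) : Set (Set (Set Ordinal.{0})) :=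
  {B | B ⊆ Pkl κ lam ∧ ∃ a ∈ Pkl κ lam, ∀ b ∈ B, ¬a ⊆ b}

/-- `Q` is a partition of `X`. -/
def IsPartitionOf {α : Type u} (Q : Set (Set α)) (X : Set α) : Prop :=
  (∀ A ∈ Q, A.Nonempty) ∧ (∀ A ∈ Q, A ⊆ X) ∧
    (∀ A ∈ Q, ∀ B ∈ Q, A ≠ B → A ∩ B = ∅) ∧ ⋃₀ Q = X

/-- The piece selection principle `PS⁺(τ, κ, λ)`. -/
def PSPlus (τ κ lam : Cardinal.{0}) : Prop :=
  ∀ Q : Set Ordinal.{0} → Set (Set (Set Ordinal.{0})),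
    (∀ a ∈ Pkl κ lam, IsPartitionOf (Q a) (Pkl κ lam) ∧ #(Q a) < Cardinal.lift.{1} τ) →
    ∃ B ∈ plusOf (Ikl κ lam) (Pkl κ lam), ∃ h : Set Ordinal.{0} → Set (Set Ordinal.{0}),
      (∀ a ∈ Pkl κ lam, h a ∈ Q a) ∧
      ∀ a ∈ B, ∀ b ∈ B, ∃ c, c ∈ h a ∧ c ∈ h b ∧ a ∪ b ⊆ c

/-- The piece selection principle `PS⋆(τ, κ, λ)`. -/
def PSStar (τ κ lam : Cardinal.{0}) : Prop :=
  ∀ Q : Set Ordinal.{0} → Set (Set (Set Ordinal.{0})),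
    (∀ a ∈ Pkl κ lam, IsPartitionOf (Q a) (Pkl κ lam) ∧ #(Q a) < Cardinal.lift.{1} τ) →
    ∃ B ∈ plusOf (Ikl κ lam) (Pkl κ lam), ∃ h : Set Ordinal.{0} → Set (Set Ordinal.{0}),
      (∀ a ∈ Pkl κ lam, h a ∈ Q a) ∧
      ∀ a ∈ B, ∀ b ∈ B, ∃ t ∈ B, a ∪ b ⊆ t ∧
        (∃ c, c ∈ h a ∧ c ∈ h t ∧ t ⊆ c) ∧ ∃ d, d ∈ h b ∧ d ∈ h t ∧ t ⊆ d

/-- The piece selection principle `PS(τ, κ, λ)`. -/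
def PSpr (τ κ lam : Cardinal.{0}) : Prop :=
  ∀ Q : Set Ordinal.{0} → Set (Set (Set Ordinal.{0})),
    (∀ a ∈ Pkl κ lam, IsPartitionOf (Q a) (Pkl κ lam) ∧ #(Q a) < Cardinal.lift.{1} τ) →
    ∃ B ∈ plusOf (Ikl κ lam) (Pkl κ lam), ∃ h : Set Ordinal.{0} → Set (Set Ordinal.{0}),
      (∀ a ∈ Pkl κ lam, h a ∈ Q a) ∧
      ∀ a ∈ B, ∀ b ∈ B, ∃ t ∈ Pkl κ lam, a ∪ b ⊆ t ∧
        (∃ c, c ∈ h a ∧ c ∈ h t ∧ t ⊆ c) ∧ ∃ d, d ∈ h b ∧ d ∈ h t ∧ t ⊆ d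

/-- The one-cardinal piece selection principle `PS⁺(τ, μ)`. -/
def PSPlusOne (τ μ : Cardinal.{0}) : Prop :=
  ∀ Q : Ordinal.{0} → Set (Set Ordinal.{0}),
    (∀ β < μ.ord, IsPartitionOf (Q β) (Set.Ico β μ.ord) ∧ #(Q β) < Cardinal.lift.{1} τ) →
    ∃ B : Set Ordinal.{0}, B ⊆ Set.Iio μ.ord ∧ (∀ γ < μ.ord, ∃ β ∈ B, γ ≤ β) ∧
      ∃ h : Ordinal.{0} → Set Ordinal.{0}, (∀ β ∈ B, h β ∈ Q β) ∧
        ∀ α ∈ B, ∀ β ∈ B, (h α ∩ h β).Nonempty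

/-- `X` is closed below `δ`: every ordinal `< δ` which is a limit of elements
of `X` belongs to `X`. -/
def IsClosedBelow (X : Set Ordinal.{0}) (δ : Ordinal.{0}) : Prop :=
  ∀ β < δ, 0 < β → (∀ γ < β, ∃ ξ ∈ X, γ < ξ ∧ ξ < β) → β ∈ X

/-- `X` is a closed unbounded subset of `δ`. -/
def IsClubBelow (X : Set Ordinal.{0}) (δ : Ordinal.{0}) : Prop :=
  X ⊆ Set.Iio δ ∧ (∀ γ < δ, ∃ ξ ∈ X, γ ≤ ξ) ∧ IsClosedBelow X δ

/-- `δ` is a remarkably good point for the sequence `f` with respect to the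
set of regular cardinals `A` and the ideal `I` on `A`. -/
def RemGoodPoint (A : Set Cardinal.{0}) (I : Set (Set Cardinal.{0}))
    (f : Ordinal.{0} → Cardinal.{0} → Ordinal.{0}) (δ : Ordinal.{0}) : Prop :=
  ∃ X : Set Ordinal.{0}, IsClubBelow X δ ∧
    ∃ Z : Ordinal.{0} → Set Cardinal.{0}, (∀ ξ ∈ X, Z ξ ∈ I) ∧
      ∀ β ∈ X, ∀ ξ ∈ X, β < ξ → ∀ a ∈ A, a ∉ Z β → a ∉ Z ξ → f β a < f ξ a

/-- `sup (a ∩ κ)`. -/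
def supk (κ : Cardinal.{0}) (a : Set Ordinal.{0}) : Ordinal.{0} :=
  sSup (a ∩ Set.Iio κ.ord)

/-- Shelah's covering number `cov(ρ₁, ρ₂, ρ₃, ρ₄)`. -/
def covNum (ρ₁ ρ₂ ρ₃ ρ₄ : Cardinal.{0}) : Cardinal.{1} :=
  sInf {c : Cardinal.{1} | ∃ X : Set (Set Ordinal.{0}), c = #X ∧
    (∀ y ∈ X, y ⊆ Set.Iio ρ₁.ord ∧ #y < Cardinal.lift.{1} ρ₂) ∧
    ∀ a : Set Ordinal.{0}, a ⊆ Set.Iio ρ₁.ord → #a < Cardinal.lift.{1} ρ₃ →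
      ∃ Q, Q ⊆ X ∧ #Q < Cardinal.lift.{1} ρ₄ ∧ a ⊆ ⋃₀ Q}

/-- `κ` is mildly `λ`-ineffable. -/
def MildlyIneffable (κ lam : Cardinal.{0}) : Prop :=
  ∀ s : Set Ordinal.{0} → Set Ordinal.{0}, (∀ a ∈ Pkl κ lam, s a ⊆ a) →
    ∃ S : Set Ordinal.{0}, S ⊆ Set.Iio lam.ord ∧
      ∀ b ∈ Pkl κ lam, ∃ a ∈ Pkl κ lam, b ⊆ a ∧ S ∩ b = s a ∩ b

/-- `Q` is a maximal `J`-almost disjoint family of `J`-positive sets. -/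
def MADOn {α : Type u} (J : Set (Set α)) (X : Set α) (Q : Set (Set α)) : Prop :=
  Q ⊆ plusOf J X ∧ (∀ A ∈ Q, ∀ B ∈ Q, A ≠ B → A ∩ B ∈ J) ∧
    ∀ C ∈ plusOf J X, ∃ A ∈ Q, A ∩ C ∉ J

/-- `Q` is a maximal disjoint family of `J`-positive sets. -/
def MADdOn {α : Type u} (J : Set (Set α)) (X : Set α) (Q : Set (Set α)) : Prop :=
  Q ⊆ plusOf J X ∧ (∀ A ∈ Q, ∀ B ∈ Q, A ≠ B → A ∩ B = ∅) ∧
    ∀ C ∈ plusOf J X, ∃ A ∈ Q, A ∩ C ∉ J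

/-- `(ρ, ν)`-distributivity of an ideal `J` on `P_κ(λ)`. -/
def DistrPkl (κ lam : Cardinal.{0}) (J : Set (Set (Set Ordinal.{0})))
    (ρ ν : Cardinal.{0}) : Prop :=
  ∀ A ∈ plusOf J (Pkl κ lam), ∀ Q : Ordinal.{0} → Set (Set (Set Ordinal.{0})),
    (∀ i, i < ρ.ord → MADOn J (Pkl κ lam) (Q i) ∧ #(Q i) ≤ Cardinal.lift.{1} ν) →
    ∃ B ∈ plusOf J (Pkl κ lam), B ⊆ A ∧
      ∃ h : Ordinal.{0} → Set (Set Ordinal.{0}),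
        (∀ i, i < ρ.ord → h i ∈ Q i) ∧ ∀ i, i < ρ.ord → B \ h i ∈ J

/-- Disjoint `(ρ, ν)`-distributivity of an ideal `J` on `P_κ(λ)`. -/
def DisjDistrPkl (κ lam : Cardinal.{0}) (J : Set (Set (Set Ordinal.{0})))
    (ρ ν : Cardinal.{0}) : Prop :=
  ∀ A ∈ plusOf J (Pkl κ lam), ∀ Q : Ordinal.{0} → Set (Set (Set Ordinal.{0})),
    (∀ i, i < ρ.ord → MADdOn J (Pkl κ lam) (Q i) ∧ #(Q i) ≤ Cardinal.lift.{1} ν) →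
    ∃ B ∈ plusOf J (Pkl κ lam), B ⊆ A ∧
      ∃ h : Ordinal.{0} → Set (Set Ordinal.{0}),
        (∀ i, i < ρ.ord → h i ∈ Q i) ∧ ∀ i, i < ρ.ord → B \ h i ∈ J

/-- Generic `(ρ, ν)`-distributivity of an ideal `J` on a set `X`. -/
def DistrU {α : Type u} (J : Set (Set α)) (X : Set α) (ρ ν : Cardinal.{u}) : Prop :=
  ∀ A ∈ plusOf J X, ∀ Q : Ordinal.{u} → Set (Set α),
    (∀ i, i < ρ.ord → MADOn J X (Q i) ∧ #(Q i) ≤ ν) →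
    ∃ B ∈ plusOf J X, B ⊆ A ∧
      ∃ h : Ordinal.{u} → Set α,
        (∀ i, i < ρ.ord → h i ∈ Q i) ∧ ∀ i, i < ρ.ord → B \ h i ∈ J

/-- `J` is `κ`-complete. -/
def KappaComplete (κ : Cardinal.{0}) (J : Set (Set (Set Ordinal.{0}))) : Prop :=
  ∀ Z : Set (Set (Set Ordinal.{0})), Z ⊆ J → #Z < Cardinal.lift.{1} κ → ⋃₀ Z ∈ J

/-- `J⁺ → (J⁺, ρ)²` relative to `J` (unbalanced partition relation on pairs
from `P_κ(λ)`). -/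
def ArrowPairOrd (κ lam : Cardinal.{0}) (J : Set (Set (Set Ordinal.{0})))
    (ρ : Cardinal.{0}) : Prop :=
  ∀ F : Set Ordinal.{0} → Set Ordinal.{0} → Fin 2, ∀ A ∈ plusOf J (Pkl κ lam),
    (∃ B ∈ plusOf J (Pkl κ lam), B ⊆ A ∧ ∀ a ∈ B, {b | b ∈ B ∧ F a b ≠ 0} ∈ J) ∨
    (∃ c : Ordinal.{0} → Set Ordinal.{0}, (∀ i, i < ρ.ord → c i ∈ A) ∧
      (∀ i j, i < j → j < ρ.ord → c i ⊂ c j) ∧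
      ∀ i j, i < j → j < ρ.ord → F (c i) (c j) = 1)

/-- `X →_κ^J (J⁺, ρ)²` (unbalanced partition relation on `κ × P_κ(λ)`). -/
def ArrowKappaPair (κ lam : Cardinal.{0}) (J : Set (Set (Set Ordinal.{0})))
    (X : Set (Set (Set Ordinal.{0}))) (ρ : Cardinal.{0}) : Prop :=
  ∀ F : Ordinal.{0} → Set Ordinal.{0} → Fin 2, ∀ A ∈ X,
    (∃ B ∈ plusOf J (Pkl κ lam), B ⊆ A ∧
      ∀ a ∈ B, {b | b ∈ B ∧ F (supk κ a) b ≠ 0} ∈ J) ∨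
    (∃ c : Ordinal.{0} → Set Ordinal.{0}, (∀ i, i < ρ.ord → c i ∈ A) ∧
      (∀ i j, i < j → j < ρ.ord → c i ⊂ c j) ∧
      ∀ i j, i < j → j < ρ.ord → F (supk κ (c i)) (c j) = 1)

/-- `{P_κ(λ)} →_J (J⁺)²_ρ` (balanced partition relation with `ρ` colors). -/
def BalArrowAll (κ lam : Cardinal.{0}) (J : Set (Set (Set Ordinal.{0})))
    (ρ : Cardinal.{0}) : Prop :=
  ∀ F : Set Ordinal.{0} → Set Ordinal.{0} → Ordinal.{0}, (∀ a b, F a b < ρ.ord) →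
    ∃ i, i < ρ.ord ∧ ∃ B ∈ plusOf J (Pkl κ lam),
      ∃ Z : Set Ordinal.{0} → Set (Set Ordinal.{0}), (∀ a ∈ B, Z a ∈ J) ∧
        ∀ a ∈ B, ∀ b ∈ B, b ∉ Z a → F a b = i

/-- `J⁺ →_J (J⁺)²_ω` (balanced partition relation with `ω` colors). -/
def ArrowOmegaColors (κ lam : Cardinal.{0}) (J : Set (Set (Set Ordinal.{0}))) : Prop :=
  ∀ F : Set Ordinal.{0} → Set Ordinal.{0} → ℕ, ∀ A ∈ plusOf J (Pkl κ lam),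
    ∃ i : ℕ, ∃ B ∈ plusOf J (Pkl κ lam), B ⊆ A ∧
      ∃ Z : Set Ordinal.{0} → Set (Set Ordinal.{0}), (∀ a ∈ B, Z a ∈ J) ∧
        ∀ a ∈ B, ∀ b ∈ B, b ∉ Z a → F a b = i

/-- `J⁺ →_J (J⁺)ⁿ_ρ` (balanced partition relation on `n`-tuples with `ρ` colors). -/
def ArrowN (κ lam : Cardinal.{0}) (J : Set (Set (Set Ordinal.{0}))) (n : ℕ)
    (ρ : Cardinal.{0}) : Prop :=
  ∀ F : (Fin n → Set Ordinal.{0}) → Ordinal.{0}, (∀ s, F s < ρ.ord) →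
    ∀ A ∈ plusOf J (Pkl κ lam),
      ∃ i, i < ρ.ord ∧ ∃ B ∈ plusOf J (Pkl κ lam), B ⊆ A ∧
        ∃ Z : Set Ordinal.{0} → Set (Set Ordinal.{0}), (∀ a ∈ B, Z a ∈ J) ∧
          ∀ s : Fin n → Set Ordinal.{0}, (∀ m, s m ∈ B) →
            (∀ m k : Fin n, k < m → s m ∉ Z (s k)) → F s = i

/-- The projected ideal `J ↾ κ` on `κ`. -/
def restrK (κ lam : Cardinal.{0}) (J : Set (Set (Set Ordinal.{0}))) :
    Set (Set Ordinal.{0}) :=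
  {X | X ⊆ Set.Iio κ.ord ∧ {a | a ∈ Pkl κ lam ∧ supk κ a ∈ X} ∈ J}

/-- `J` is a weak `π`-point. -/
def WeakPiPoint (κ lam : Cardinal.{0}) (J : Set (Set (Set Ordinal.{0}))) : Prop :=
  ∀ A ∈ plusOf J (Pkl κ lam), ∀ f : Ordinal.{0} → Set (Set Ordinal.{0}),
    (∀ α, α < κ.ord → f α ∈ J) →
    ∃ B ∈ plusOf J (Pkl κ lam), B ⊆ A ∧ ∀ α, α < κ.ord → B ∩ f α ∈ Ikl κ lam

/-- `J` is a weak `χ`-point. -/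
def WeakChiPoint (κ lam : Cardinal.{0}) (J : Set (Set (Set Ordinal.{0}))) : Prop :=
  ∀ A ∈ plusOf J (Pkl κ lam), ∀ g : Ordinal.{0} → Set Ordinal.{0},
    (∀ α, α < κ.ord → g α ∈ Pkl κ lam) →
    ∃ B ∈ plusOf J (Pkl κ lam), B ⊆ A ∧
      ∀ a ∈ B, ∀ b ∈ B, supk κ a < supk κ b → g (supk κ a) ⊆ b

/-- `C` is a closed unbounded subset of `P_κ(λ)`. -/
def IsClubPkl (κ lam : Cardinal.{0}) (C : Set (Set Ordinal.{0})) : Prop :=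
  C ⊆ Pkl κ lam ∧ (∀ a ∈ Pkl κ lam, ∃ b ∈ C, a ⊆ b) ∧
    ∀ β : Ordinal.{0}, 0 < β → β < κ.ord →
      ∀ f : Ordinal.{0} → Set Ordinal.{0},
        (∀ i, i < β → f i ∈ C) → (∀ i j, i ≤ j → j < β → f i ⊆ f j) →
        (⋃ i ∈ Set.Iio β, f i) ∈ C

/-- The set `S^λ_{κ,λ} = {a ∈ P_κ(λ) : |a| = |a ∩ κ|}`. -/
def Slamset (κ lam : Cardinal.{0}) : Set (Set Ordinal.{0}) :=
  {a | a ∈ Pkl κ lam ∧ #a = #((a ∩ Set.Iio κ.ord : Set Ordinal.{0}))}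

/-- The ideal `I_κ` of bounded subsets of `κ`. -/
def Ibd (κ : Cardinal.{0}) : Set (Set Ordinal.{0}) :=
  {X | X ⊆ Set.Iio κ.ord ∧ ∃ α, α < κ.ord ∧ X ⊆ Set.Iio α}

/-- The ideal extension principle `IE(τ, κ, I_κ)`. -/
def IEkappa (τ κ : Cardinal.{0}) : Prop :=
  ∀ Q : Ordinal.{0} → Set (Set Ordinal.{0}),
    (∀ α < κ.ord, IsPartitionOf (Q α) (Set.Ico α κ.ord) ∧ #(Q α) < Cardinal.lift.{1} τ) →
    ∃ h : Ordinal.{0} → Set Ordinal.{0}, (∀ α < κ.ord, h α ∈ Q α) ∧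
      ∃ K : Set (Set Ordinal.{0}), IsIdealOn K (Set.Iio κ.ord) ∧ Ibd κ ⊆ K ∧
        ∀ α < κ.ord, Set.Iio κ.ord \ h α ∈ K

/-- The transversal property `PT(κ, τ)`. -/
def PT (κ τ : Cardinal.{0}) : Prop :=
  ∀ X : Ordinal.{0} → Set Ordinal.{0},
    (∀ α, α < κ.ord → #(X α) < Cardinal.lift.{1} τ) →
    (¬∃ g : Ordinal.{0} → Ordinal.{0}, (∀ α, α < κ.ord → g α ∈ X α) ∧
        Set.InjOn g (Set.Iio κ.ord)) →
    ∃ b : Set Ordinal.{0}, b ⊆ Set.Iio κ.ord ∧ #b < Cardinal.lift.{1} κ ∧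
      ¬∃ g : Ordinal.{0} → Ordinal.{0}, (∀ α ∈ b, g α ∈ X α) ∧ Set.InjOn g b

/-- `(T, lt)` is a tree whose height function is `ht` : the predecessors of
any node `t` are well-ordered by `lt`, in order type `ht t`. -/
def IsTreeWithHeight (T : Type) (lt : T → T → Prop) (ht : T → Ordinal.{0}) : Prop :=
  (∀ t, ¬lt t t) ∧ (∀ r s t, lt r s → lt s t → lt r t) ∧
    (∀ s t, lt s t → ht s < ht t) ∧
    (∀ t, ∀ α, α < ht t → ∃ s, lt s t ∧ ht s = α) ∧
    (∀ s₁ s₂ t, lt s₁ t → lt s₂ t → ht s₁ = ht s₂ → s₁ = s₂) ∧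
    (∀ s₁ s₂ t, lt s₁ t → lt s₂ t → ht s₁ < ht s₂ → lt s₁ s₂)

/-- The tree property `TP(κ)` : every tree of height `κ` whose levels have
size `< κ` has a `κ`-branch. -/
def TP (κ : Cardinal.{0}) : Prop :=
  ∀ (T : Type) (lt : T → T → Prop) (ht : T → Ordinal.{0}),
    IsTreeWithHeight T lt ht →
    (∀ t, ht t < κ.ord) →
    (∀ α < κ.ord, ∃ t, ht t = α) →
    (∀ α : Ordinal.{0}, #{t : T // ht t = α} < κ) →
    ∃ B : Set T, (∀ s ∈ B, ∀ t ∈ B, s ≠ t → lt s t ∨ lt t s) ∧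
      ∀ α < κ.ord, ∃ t ∈ B, ht t = α

/-! ### Recursion, bounds and closure points below regular cardinals -/

/-- Transfinite recursion along `L` with choice: if `R ζ x` depends only on the values of `x`
below `ζ` and can always be satisfied, some `x` satisfies `R ζ x (x ζ)` at every stage `ζ < L`. -/
theorem exists_rec {A : Type*} [Nonempty A] (L : Ordinal.{0})
    (R : Ordinal.{0} → (Ordinal.{0} → A) → A → Prop)
    (hloc : ∀ ζ h h' a, (∀ ζ' < ζ, h ζ' = h' ζ') → R ζ h a → R ζ h' a)
    (hex : ∀ ζ < L, ∀ h, (∀ ζ' < ζ, R ζ' h (h ζ')) → ∃ a, R ζ h a) :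
    ∃ x : Ordinal.{0} → A, ∀ ζ < L, R ζ x (x ζ) := by
  classical
  let T : (ζ : Ordinal.{0}) → ((ζ' : Ordinal.{0}) → ζ' < ζ → A) → Ordinal.{0} → A :=
    fun ζ ih ζ' => if hh : ζ' < ζ then ih ζ' hh else Classical.arbitrary A
  let G : (ζ : Ordinal.{0}) → ((ζ' : Ordinal.{0}) → ζ' < ζ → A) → A :=
    fun ζ ih => Classical.epsilon (R ζ (T ζ ih))
  let x : Ordinal.{0} → A := WellFounded.fix Ordinal.lt_wf G
  have hx : ∀ ζ, x ζ = Classical.epsilon (R ζ (T ζ (fun ζ' _ => x ζ'))) :=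
    fun ζ => WellFounded.fix_eq Ordinal.lt_wf G ζ
  have hT : ∀ ζ, ∀ ζ' < ζ, T ζ (fun ζ' _ => x ζ') ζ' = x ζ' := by
    intro ζ ζ' h
    simp only [T, dif_pos h]
  refine ⟨x, fun ζ => ?_⟩
  induction ζ using Ordinal.lt_wf.induction with
  | _ ζ ih =>
    intro hζ
    have h1 : ∃ a, R ζ x a := hex ζ hζ x fun ζ' h => ih ζ' h (h.trans hζ)
    obtain ⟨a, ha⟩ := h1
    have h2 : R ζ (T ζ (fun ζ' _ => x ζ')) a := hloc _ _ _ _ (fun ζ' h => (hT ζ ζ' h).symm) ha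
    have h3 := Classical.epsilon_spec (p := R ζ (T ζ (fun ζ' _ => x ζ'))) ⟨a, h2⟩
    rw [← hx] at h3
    exact hloc _ _ _ _ (hT ζ) h3

theorem mk_Iio_ord (c : Cardinal.{0}) : #(Iio c.ord) = lift.{1} c := by
  rw [Cardinal.mk_Iio_ordinal, card_ord]

theorem mk_Iio_lt {c : Cardinal.{0}} {o : Ordinal.{0}} (h : o < c.ord) :
    #(Iio o) < lift.{1} c := by
  rw [Cardinal.mk_Iio_ordinal, Cardinal.lift_lt]
  exact Cardinal.lt_ord.1 h

theorem bddAbove_range' {ι : Type 1} {f : ι → Ordinal.{0}} {δ : Ordinal.{0}}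
    (h : ∀ i, f i < δ) : BddAbove (range f) :=
  ⟨δ, by rintro _ ⟨i, rfl⟩; exact (h i).le⟩

theorem exists_bound {δ : Ordinal.{0}} {ι : Type 1} (f : ι → Ordinal.{0})
    (hf : ∀ i, f i < δ) (hc : #ι < lift.{1} δ.cof) : ∃ β < δ, ∀ i, f i ≤ β := by
  refine ⟨sSup (range f), ?_, fun i => le_csSup (bddAbove_range' hf) ⟨i, rfl⟩⟩
  apply Ordinal.sSup_lt_of_lt_cof
  · rw [← Ordinal.lift_cof]
    exact lt_of_le_of_lt mk_range_le hc
  · rintro _ ⟨i, rfl⟩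
    exact hf i

theorem succ_lt_ord {c : Cardinal.{0}} (hc : ℵ₀ ≤ c) {o : Ordinal.{0}} (h : o < c.ord) :
    Order.succ o < c.ord := (Cardinal.isSuccLimit_ord hc).succ_lt h

theorem exists_strict_bound {ν : Cardinal.{0}} (hν : ν.IsRegular) {ι : Type 1}
    (f : ι → Ordinal.{0}) (hf : ∀ i, f i < ν.ord) (hc : #ι < lift.{1} ν) :
    ∃ β < ν.ord, ∀ i, f i < β := by
  obtain ⟨β, h1, h2⟩ := exists_bound f hf (by rwa [hν.cof_ord])
  exact ⟨Order.succ β, succ_lt_ord hν.aleph0_le h1, fun i => Order.lt_succ_of_le (h2 i)⟩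

/-- Closure points of a function `b : ν → ν` are unbounded in `ν`. -/
theorem exists_closure {ν : Cardinal.{0}} (hν : ν.IsRegular) (hun : ℵ₀ < ν)
    (b : Ordinal.{0} → Ordinal.{0}) (hb : ∀ j < ν.ord, b j < ν.ord) {k : Ordinal.{0}}
    (hk : k < ν.ord) : ∃ η < ν.ord, k < η ∧ ∀ j < η, b j < η := by
  have hs : ∀ x : Iio ν.ord, ∃ y : Iio ν.ord, x.1 < y.1 ∧ ∀ j < x.1, b j < y.1 := by
    rintro ⟨x, hx⟩
    obtain ⟨β, h1, h2⟩ := exists_strict_bound hν (fun j : Iio x => b j.1)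
      (fun j => hb _ (lt_trans j.2 hx)) (mk_Iio_lt hx)
    refine ⟨⟨Order.succ (max x β), succ_lt_ord hν.aleph0_le (max_lt hx h1)⟩, ?_, ?_⟩
    · exact Order.lt_succ_of_le (le_max_left _ _)
    · intro j hj
      exact (h2 ⟨j, hj⟩).trans (Order.lt_succ_of_le (le_max_right _ _))
  choose s hs1 hs2 using hs
  let y : ℕ → Iio ν.ord := fun n => s^[n] ⟨k, hk⟩
  have hy : ∀ n, y (n+1) = s (y n) := fun n => Function.iterate_succ_apply' s n _
  let f : ULift.{1} ℕ → Ordinal.{0} := fun n => (y n.down).1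
  obtain ⟨β, h1, h2⟩ := exists_strict_bound hν f (fun n => (y n.down).2) (by simpa using hun)
  have hle : ∀ n, (y n).1 ≤ sSup (range f) := fun n =>
    le_csSup (bddAbove_range' (fun n => (y n.down).2)) ⟨⟨n⟩, rfl⟩
  refine ⟨sSup (range f), lt_of_le_of_lt (csSup_le' ?_) h1, ?_, ?_⟩
  · rintro _ ⟨n, rfl⟩; exact (h2 n).le
  · exact lt_of_lt_of_le (by rw [hy 0]; exact hs1 _ : k < (y 1).1) (hle 1)
  · intro j hj
    obtain ⟨_, ⟨n, rfl⟩, hn⟩ := exists_lt_of_lt_csSup' hj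
    refine lt_of_lt_of_le (hs2 (y n.down) j hn) ?_
    rw [← hy]; exact hle _

theorem exists_injOn {δ δ' : Ordinal.{0}} (h : δ.card ≤ δ'.card) :
    ∃ f : Ordinal.{0} → Ordinal.{0}, InjOn f (Iio δ) ∧ MapsTo f (Iio δ) (Iio δ') := by
  classical
  have : #(Iio δ) ≤ #(Iio δ') := by
    rw [Cardinal.mk_Iio_ordinal, Cardinal.mk_Iio_ordinal, Cardinal.lift_le]
    exact h
  obtain ⟨e⟩ := this
  refine ⟨fun x => if hx : x < δ then (e ⟨x, hx⟩).1 else 0, ?_, ?_⟩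
  · intro x hx y hy hxy
    simp only [mem_Iio] at hx hy
    simp only [dif_pos hx, dif_pos hy] at hxy
    exact congrArg Subtype.val (e.injective (Subtype.ext hxy))
  · intro x hx
    simp only [mem_Iio] at hx
    simp only [dif_pos hx]
    exact (e _).2

/-- Union bound: at most `c` sets of size at most `c`, with `c` infinite. -/
theorem mk_iUnion_le_of {α ι : Type 1} (f : ι → Set α) {c : Cardinal.{1}} (hc : ℵ₀ ≤ c)
    (hι : #ι ≤ c) (hf : ∀ i, #(f i) ≤ c) : #(⋃ i, f i) ≤ c := by
  refine (mk_iUnion_le_sum_mk (f := f)).trans ?_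
  refine (Cardinal.sum_le_sum _ (fun _ => c) hf).trans ?_
  simp only [sum_const, Cardinal.lift_id]
  exact (mul_le_mul' hι le_rfl).trans (mul_eq_self hc).le

theorem mk_biUnion_le_of {α β : Type 1} (s : Set β) (f : β → Set α) {c : Cardinal.{1}} (hc : ℵ₀ ≤ c)
    (hι : #s ≤ c) (hf : ∀ i ∈ s, #(f i) ≤ c) : #(⋃ i ∈ s, f i : Set α) ≤ c := by
  rw [biUnion_eq_iUnion]
  exact mk_iUnion_le_of _ hc hι fun i => hf _ i.2

/-! ### Covering numbers and mild ineffability -/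

/-- `CovLe κ δ c`: some family of at most `c` sets of size at most `κ` is such that every
subset of `δ` of size at most `κ` is covered by fewer than `κ` members of the family; for
cardinals `δ` this says `cov(δ, κ⁺, κ⁺, κ) ≤ c`. -/
def CovLe (κ : Cardinal.{0}) (δ : Ordinal.{0}) (c : Cardinal.{0}) : Prop :=
  ∃ X : Set (Set Ordinal.{0}), #X ≤ lift.{1} c ∧ (∀ y ∈ X, #y ≤ lift.{1} κ) ∧
    ∀ a : Set Ordinal.{0}, a ⊆ Iio δ → #a ≤ lift.{1} κ →
      ∃ Q, Q ⊆ X ∧ #Q < lift.{1} κ ∧ a ⊆ ⋃₀ Q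

theorem CovLe.mono {κ : Cardinal.{0}} {δ : Ordinal.{0}} {c c' : Cardinal.{0}}
    (h : CovLe κ δ c) (hc : c ≤ c') : CovLe κ δ c' := by
  obtain ⟨X, h1, h2⟩ := h
  exact ⟨X, h1.trans (Cardinal.lift_le.2 hc), h2⟩

/-- The covering number of an ordinal depends monotonically on its cardinality only. -/
theorem CovLe.transfer {κ : Cardinal.{0}} {δ δ' : Ordinal.{0}} {c : Cardinal.{0}}
    (h : CovLe κ δ' c) (hδ : δ.card ≤ δ'.card) : CovLe κ δ c := by
  obtain ⟨X, h1, h2, h3⟩ := h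
  obtain ⟨f, hf1, hf2⟩ := exists_injOn hδ
  refine ⟨(fun y => Iio δ ∩ f ⁻¹' y) '' X, mk_image_le.trans h1, ?_, ?_⟩
  · rintro _ ⟨y, hy, rfl⟩
    refine le_trans ?_ (h2 y hy)
    rw [← mk_image_eq_of_injOn f _ (hf1.mono inter_subset_left)]
    apply mk_le_mk_of_subset
    rintro _ ⟨x, hx, rfl⟩
    exact hx.2
  · intro a ha hac
    obtain ⟨Q, hQ1, hQ2, hQ3⟩ := h3 (f '' a)
      (by rintro _ ⟨x, hx, rfl⟩; exact hf2 (ha hx)) (mk_image_le.trans hac)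
    refine ⟨(fun y => Iio δ ∩ f ⁻¹' y) '' Q, image_mono hQ1, lt_of_le_of_lt mk_image_le hQ2, ?_⟩
    intro x hx
    obtain ⟨y, hy, hxy⟩ := hQ3 ⟨x, hx, rfl⟩
    exact ⟨_, ⟨y, hy, rfl⟩, ha hx, hxy⟩

theorem MildlyIneffable.mono {κ lam lam' : Cardinal.{0}} (h : MildlyIneffable κ lam)
    (hl : lam' ≤ lam) : MildlyIneffable κ lam' := by
  have hsub : Iio lam'.ord ⊆ Iio lam.ord := Iio_subset_Iio (ord_le_ord.2 hl)
  intro s hs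
  have hP : ∀ a ∈ Pkl κ lam, a ∩ Iio lam'.ord ∈ Pkl κ lam' := fun a ha =>
    ⟨inter_subset_right, lt_of_le_of_lt (mk_le_mk_of_subset inter_subset_left) ha.2⟩
  obtain ⟨S, hS1, hS2⟩ := h (fun a => s (a ∩ Iio lam'.ord))
    (fun a ha => (hs _ (hP a ha)).trans inter_subset_left)
  refine ⟨S ∩ Iio lam'.ord, inter_subset_right, fun b hb => ?_⟩
  obtain ⟨a, ha, hba, hSa⟩ := hS2 b ⟨hb.1.trans hsub, hb.2⟩
  refine ⟨a ∩ Iio lam'.ord, hP a ha, subset_inter hba hb.1, ?_⟩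
  rw [← hSa, inter_assoc, inter_eq_right.2 hb.1]

/-- Mild ineffability in ultrafilter form: for a family of `θ` many properties of members of
`P_κ(θ)`, a decision `D` can be made for all properties, such that any fewer than `κ` of the
decisions are simultaneously correct at cofinally many members of `P_κ(θ)`. -/
theorem MildlyIneffable.exists_decision {κ θ : Cardinal.{0}} (hκ : κ.IsRegular)
    (h : MildlyIneffable κ θ) {I : Type 1} (hI : #I ≤ lift.{1} θ)
    (A : I → Set (Set Ordinal.{0})) :
    ∃ D : Set I, ∀ J : Set I, #J < lift.{1} κ → ∀ b ∈ Pkl κ θ,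
      ∃ a ∈ Pkl κ θ, b ⊆ a ∧ ∀ i ∈ J, (i ∈ D ↔ a ∈ A i) := by
  rw [← mk_Iio_ord] at hI
  obtain ⟨e⟩ := hI
  obtain ⟨S, hS1, hS2⟩ := h (fun a => {ξ ∈ a | ∃ i, (e i).1 = ξ ∧ a ∈ A i})
    (fun a _ => sep_subset _ _)
  refine ⟨{i | (e i).1 ∈ S}, fun J hJ b hb => ?_⟩
  have hb' : b ∪ (fun i => (e i).1) '' J ∈ Pkl κ θ := by
    refine ⟨union_subset hb.1 ?_, ?_⟩
    · rintro _ ⟨i, -, rfl⟩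
      exact (e i).2
    · refine lt_of_le_of_lt (mk_union_le _ _) ?_
      exact add_lt_of_lt (by simpa using hκ.aleph0_le) hb.2 (lt_of_le_of_lt mk_image_le hJ)
  obtain ⟨a, ha, hba, hSa⟩ := hS2 _ hb'
  refine ⟨a, ha, subset_union_left.trans hba, fun i hi => ?_⟩
  have hmem : (e i).1 ∈ b ∪ (fun i => (e i).1) '' J := Or.inr ⟨i, hi, rfl⟩
  have := Set.ext_iff.1 hSa (e i).1
  simp only [mem_inter_iff, hmem, and_true, mem_ofPred_eq] at this
  simp only [mem_ofPred_eq, this]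
  constructor
  · rintro ⟨-, j, hj, hj'⟩
    rwa [e.injective (Subtype.ext hj)] at hj'
  · exact fun hh => ⟨hba hmem, i, rfl, hh⟩

/-! ### Small cofinal families in `P_κ(θ)` -/

/-- The strict supremum of a set of ordinals; it takes a junk value on unbounded sets. -/
def ssup (x : Set Ordinal.{0}) : Ordinal.{0} := sSup (Order.succ '' x)

theorem lt_ssup {x : Set Ordinal.{0}} {t v : Ordinal.{0}} (hx : x ⊆ Iio t) (hv : v ∈ x) :
    v < ssup x := by
  refine lt_of_lt_of_le (Order.lt_succ v) (le_csSup ⟨t, ?_⟩ ⟨v, hv, rfl⟩)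
  rintro _ ⟨w, hw, rfl⟩
  exact Order.succ_le_of_lt (hx hw)

theorem ssup_le {x : Set Ordinal.{0}} {t : Ordinal.{0}} (hx : x ⊆ Iio t) : ssup x ≤ t := by
  refine csSup_le' ?_
  rintro _ ⟨w, hw, rfl⟩
  exact Order.succ_le_of_lt (hx hw)

theorem exists_le_of_lt_ssup {x : Set Ordinal.{0}} {v : Ordinal.{0}} (hv : v < ssup x) :
    ∃ w ∈ x, v ≤ w := by
  obtain ⟨_, ⟨w, hw, rfl⟩, h⟩ := exists_lt_of_lt_csSup' hv
  exact ⟨w, hw, Order.lt_succ_iff.1 h⟩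

theorem ssup_lt {κ θ : Cardinal.{0}} (hθ : θ.IsRegular) (hκθ : κ < θ) {x : Set Ordinal.{0}}
    (hx : x ⊆ Iio θ.ord) (hc : #x < lift.{1} κ) : ssup x < θ.ord := by
  obtain ⟨β, h1, h2⟩ := exists_strict_bound hθ (fun i : x => i.1) (fun i => hx i.2)
    (hc.trans (Cardinal.lift_lt.2 hκθ))
  exact lt_of_le_of_lt (ssup_le fun v hv => h2 ⟨v, hv⟩) h1

/-- If `κ` is mildly `θ`-ineffable with `θ > κ` regular, then `P_κ(θ)` has a cofinal subset of
size `θ`. The proof mimics Solovay's for strongly compact cardinals, a decision of the statements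
`β ≤ h l a` playing the role of a fine `κ`-complete ultrafilter on `P_κ(θ)`. The ordinals `h l a`
are suprema of subsets of `a`, hence of cofinality below `κ`. A list `l` is found for which the
decision makes `h l` exceed every `β < θ`, while each `h (β :: l)` is bounded by some `φ β < θ`.
Then the cofinal set `c (h l a)`, which has fewer than `κ` elements, meets `[β, φ β]` for any
prescribed fewer than `κ` many `β`, and `F γ` records which of `θ` many disjoint intervals of this
form are met by `c γ`. -/
theorem exists_cofinal_family {κ θ : Cardinal.{0}} (hκ : κ.IsRegular) (hunc : ℵ₀ < κ)
    (hθ : θ.IsRegular) (hκθ : κ < θ) (hmi : MildlyIneffable κ θ) :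
    ∃ F : Ordinal.{0} → Set Ordinal.{0}, (∀ γ, #(F γ) < lift.{1} κ) ∧
      ∀ b ⊆ Iio θ.ord, #b < lift.{1} κ → ∃ γ < θ.ord, b ⊆ F γ := by
  classical
  have hκ0 : ℵ₀ ≤ lift.{1} κ := by simpa using hκ.aleph0_le
  have hpos : (0 : Ordinal.{0}) < θ.ord := by
    have := hθ.pos; simpa using this.ne'.bot_lt
  -- `c γ` is a cofinal subset of `γ` of size less than `κ`, if there is one
  have hc : ∀ γ : Ordinal.{0}, ∃ c : Set Ordinal.{0}, c ⊆ Iio γ ∧ #c < lift.{1} κ ∧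
      ∀ x ⊆ Iio γ, #x < lift.{1} κ → (∀ β < γ, ∃ v ∈ x, β ≤ v) → ∀ β < γ, ∃ v ∈ c, β ≤ v := by
    intro γ
    by_cases hg : ∃ x ⊆ Iio γ, #x < lift.{1} κ ∧ ∀ β < γ, ∃ v ∈ x, β ≤ v
    · obtain ⟨x, h1, h2, h3⟩ := hg
      exact ⟨x, h1, h2, fun _ _ _ _ => h3⟩
    · refine ⟨∅, empty_subset _, ?_, fun x h1 h2 h3 => (hg ⟨x, h1, h2, h3⟩).elim⟩
      rw [Cardinal.mk_eq_zero]
      exact lt_of_lt_of_le aleph0_pos hκ0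
  choose c hc1 hc2 hc3 using hc
  -- `p β γ` is the least element of `c γ` that is at least `β`
  let p : Ordinal.{0} → Ordinal.{0} → Ordinal.{0} := fun β γ => sInf {x ∈ c γ | β ≤ x}
  let h : List (Iio θ.ord) → Set Ordinal.{0} → Ordinal.{0} := fun l a =>
    l.foldr (fun β γ => ssup (a ∩ Iio (p β.1 γ))) (ssup a)
  have hcons : ∀ (β : Iio θ.ord) l a, h (β :: l) a = ssup (a ∩ Iio (p β.1 (h l a))) :=
    fun _ _ _ => rfl
  have hsub : ∀ l a, ∃ x ⊆ a, h l a = ssup x := by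
    intro l a
    cases l with
    | nil => exact ⟨a, subset_rfl, rfl⟩
    | cons β l => exact ⟨_, inter_subset_left, rfl⟩
  have hlt : ∀ l, ∀ a ∈ Pkl κ θ, h l a < θ.ord := by
    intro l a ha
    obtain ⟨x, hx, hx'⟩ := hsub l a
    rw [hx']
    exact ssup_lt hθ hκθ (hx.trans ha.1) (lt_of_le_of_lt (mk_le_mk_of_subset hx) ha.2)
  have hp : ∀ l, ∀ a ∈ Pkl κ θ, ∀ β < h l a, p β (h l a) ∈ c (h l a) ∧ β ≤ p β (h l a) := by
    intro l a ha β hβ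
    obtain ⟨x, hx, hx'⟩ := hsub l a
    have hne : {v ∈ c (h l a) | β ≤ v}.Nonempty := by
      refine hc3 (h l a) x ?_ (lt_of_le_of_lt (mk_le_mk_of_subset hx) ha.2) ?_ β hβ
      · intro v hv
        rw [hx']
        exact lt_ssup (hx.trans ha.1) hv
      · intro β hβ
        rw [hx'] at hβ
        exact exists_le_of_lt_ssup hβ
    exact csInf_mem hne
  have hI : #(List (Iio θ.ord) × Iio θ.ord) ≤ lift.{1} θ := by
    have hinf : Infinite (Iio θ.ord) := by
      rw [Cardinal.infinite_iff, mk_Iio_ord]; simpa using hθ.aleph0_le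
    rw [mk_prod, mk_list_eq_mk, mk_Iio_ord]
    simp only [Cardinal.lift_id]
    exact (mul_eq_self (by simpa using hθ.aleph0_le)).le
  obtain ⟨D, hD⟩ := hmi.exists_decision hκ hI (fun i => {a | i.2.1 ≤ h i.1 a})
  have hsucc : ∀ β : Iio θ.ord, Order.succ β.1 < θ.ord := fun β => succ_lt_ord hθ.aleph0_le β.2
  have hnil : ∀ β, (([] : List (Iio θ.ord)), β) ∈ D := by
    intro β
    obtain ⟨a, ha, hba, hJ⟩ := hD {([], β)} (by simpa using one_lt_aleph0.trans hunc) {β.1}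
      ⟨by simp, by simpa using one_lt_aleph0.trans hunc⟩
    exact (hJ _ rfl).2 (lt_ssup ha.1 (hba rfl)).le
  -- otherwise lists could be extended forever, and for one `a` the ordinals `h l a` would
  -- decrease infinitely often
  have hex : ∃ l, (∀ β, (l, β) ∈ D) ∧ ∀ β, ∃ φ, (β :: l, φ) ∉ D := by
    by_contra hcon
    push Not at hcon
    choose β hβ using hcon
    let s : ℕ → {l : List (Iio θ.ord) // ∀ β, (l, β) ∈ D} := fun n =>
      (fun q => ⟨β q.1 q.2 :: q.1, hβ q.1 q.2⟩)^[n] ⟨[], hnil⟩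
    have hs : ∀ n, (s (n+1)).1 = β (s n).1 (s n).2 :: (s n).1 := by
      intro n
      simp only [s]
      rw [Function.iterate_succ_apply']
    let J : ℕ → List (Iio θ.ord) × Iio θ.ord := fun n =>
      ((s n).1, ⟨Order.succ (β (s n).1 (s n).2).1, hsucc _⟩)
    have hJc : #(range J) < lift.{1} κ := by
      refine lt_of_le_of_lt (Cardinal.le_aleph0_iff_set_countable.2 (countable_range J)) ?_
      simpa using hunc
    obtain ⟨a, ha, -, hJ⟩ := hD (range J) hJc ∅
      ⟨empty_subset _, by rw [Cardinal.mk_eq_zero]; exact lt_of_lt_of_le aleph0_pos hκ0⟩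
    have hdec : ∀ n, h (s (n+1)).1 a < h (s n).1 a := by
      intro n
      have h1 : Order.succ (β (s n).1 (s n).2).1 ≤ h (s n).1 a :=
        (hJ (J n) ⟨n, rfl⟩).1 ((s n).2 _)
      rw [hs, hcons]
      refine lt_of_le_of_lt (ssup_le inter_subset_right) ?_
      exact hc1 _ (hp _ a ha _ (Order.succ_le_iff.1 h1)).1
    obtain ⟨n, hn⟩ := WellFounded.not_rel_apply_succ (r := (· < ·)) (fun n => h (s n).1 a)
    exact hn (hdec n)
  obtain ⟨l, hl, hl'⟩ := hex
  choose φ hφ using hl'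
  have hne : Nonempty (Iio θ.ord) := ⟨⟨0, hpos⟩⟩
  -- the intervals `[β ξ, φ (β ξ)]` for `ξ < θ` are pairwise disjoint
  obtain ⟨β, hβ⟩ := exists_rec θ.ord
    (fun ζ (x : Ordinal.{0} → Iio θ.ord) (a : Iio θ.ord) => ∀ ζ' < ζ, (φ (x ζ')).1 < a.1)
    (fun ζ x x' a hx hR ζ' hζ' => by rw [← hx ζ' hζ']; exact hR ζ' hζ')
    (fun ζ hζ x _ => by
      obtain ⟨B, hB1, hB2⟩ := exists_strict_bound hθ (fun i : Iio ζ => (φ (x i.1)).1)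
        (fun i => (φ _).2) (mk_Iio_lt hζ)
      exact ⟨⟨B, hB1⟩, fun ζ' hζ' => hB2 ⟨ζ', hζ'⟩⟩)
  refine ⟨fun γ => {ξ | ξ < θ.ord ∧ ∃ q ∈ c γ, (β ξ).1 ≤ q ∧ q ≤ (φ (β ξ)).1}, fun γ => ?_, ?_⟩
  · refine lt_of_le_of_lt ?_ (hc2 γ)
    have hch : ∀ ξ : {ξ | ξ < θ.ord ∧ ∃ q ∈ c γ, (β ξ).1 ≤ q ∧ q ≤ (φ (β ξ)).1},
      ∃ q : c γ, (β ξ.1).1 ≤ q ∧ q ≤ (φ (β ξ.1)).1 := fun ξ => by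
        obtain ⟨q, h1, h2⟩ := ξ.2.2
        exact ⟨⟨q, h1⟩, h2⟩
    choose q hq1 hq2 using hch
    refine mk_le_of_injective (f := q) ?_
    have key : ∀ ξ ξ', ξ.1 < ξ'.1 → q ξ ≠ q ξ' := by
      intro ξ ξ' hlt' heq
      have h1 := hβ ξ'.1 ξ'.2.1 ξ.1 hlt'
      have h2 := hq2 ξ
      have h3 := hq1 ξ'
      rw [heq] at h2
      exact absurd (h3.trans h2) (not_le.2 h1)
    intro ξ ξ' heq
    rcases lt_trichotomy ξ.1 ξ'.1 with hh | hh | hh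
    · exact (key _ _ hh heq).elim
    · exact Subtype.ext hh
    · exact (key _ _ hh heq.symm).elim
  · intro b hb hbc
    let J : Set (List (Iio θ.ord) × Iio θ.ord) :=
      (fun ξ => (l, ⟨Order.succ (β ξ).1, hsucc _⟩)) '' b ∪ (fun ξ => (β ξ :: l, φ (β ξ))) '' b
    obtain ⟨a, ha, hba, hJ⟩ := hD J
      (lt_of_le_of_lt (mk_union_le _ _) (add_lt_of_lt hκ0 (lt_of_le_of_lt mk_image_le hbc)
        (lt_of_le_of_lt mk_image_le hbc))) ((fun ξ => (φ (β ξ)).1) '' b)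
      ⟨by rintro _ ⟨ξ, -, rfl⟩; exact (φ _).2, lt_of_le_of_lt mk_image_le hbc⟩
    refine ⟨h l a, hlt l a ha, fun ξ hξ => ⟨hb hξ, p (β ξ).1 (h l a), ?_⟩⟩
    have h1 : Order.succ (β ξ).1 ≤ h l a := (hJ _ (Or.inl ⟨ξ, hξ, rfl⟩)).1 (hl _)
    have h2 : ¬ (φ (β ξ)).1 ≤ h (β ξ :: l) a := fun hh =>
      hφ _ ((hJ _ (Or.inr ⟨ξ, hξ, rfl⟩)).2 hh)
    obtain ⟨h3, h4⟩ := hp l a ha _ (Order.succ_le_iff.1 h1)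
    refine ⟨h3, h4, ?_⟩
    by_contra h5
    apply h2
    have h6 : (φ (β ξ)).1 ∈ a := hba (mem_image_of_mem (fun ξ => (φ (β ξ)).1) hξ)
    have h7 := lt_ssup (x := a ∩ Iio (p (β ξ).1 (h l a))) (t := θ.ord) (v := (φ (β ξ)).1)
      (fun _ hv => ha.1 hv.1) ⟨h6, not_le.1 h5⟩
    rw [hcons]
    exact h7.le

/-! ### Club guessing -/

/-- The closure points of `b` below `ν`; this is a closed unbounded set if `ν` is an
uncountable regular cardinal and `b` maps `ν` to `ν`. -/
def Clos (ν : Cardinal.{0}) (b : Ordinal.{0} → Ordinal.{0}) : Set Ordinal.{0} :=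
  {η | η < ν.ord ∧ ∀ j < η, b j < η}

theorem Clos_anti {ν : Cardinal.{0}} {b b' : Ordinal.{0} → Ordinal.{0}}
    (h : ∀ j < ν.ord, b j ≤ b' j) : Clos ν b' ⊆ Clos ν b :=
  fun _ hη => ⟨hη.1, fun j hj => lt_of_le_of_lt (h j (hj.trans hη.1)) (hη.2 j hj)⟩

/-- The largest closure point of `b` that is at most `γ`. -/
def closProj (ν : Cardinal.{0}) (b : Ordinal.{0} → Ordinal.{0}) (γ : Ordinal.{0}) :
    Ordinal.{0} := sSup (Clos ν b ∩ Iic γ)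

theorem closProj_le (ν : Cardinal.{0}) (b : Ordinal.{0} → Ordinal.{0}) (γ : Ordinal.{0}) :
    closProj ν b γ ≤ γ := csSup_le' fun _ h => h.2

theorem le_closProj {ν : Cardinal.{0}} {b : Ordinal.{0} → Ordinal.{0}} {γ η : Ordinal.{0}}
    (h : η ∈ Clos ν b) (hγ : η ≤ γ) : η ≤ closProj ν b γ :=
  le_csSup ⟨γ, fun _ h => h.2⟩ ⟨h, hγ⟩

theorem closProj_mem {ν : Cardinal.{0}} (b : Ordinal.{0} → Ordinal.{0}) {γ : Ordinal.{0}}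
    (hγ : γ < ν.ord) : closProj ν b γ ∈ Clos ν b := by
  refine ⟨(closProj_le ν b γ).trans_lt hγ, fun j hj => ?_⟩
  obtain ⟨η, hη, hjη⟩ := exists_lt_of_lt_csSup' hj
  exact (hη.1.2 j hjη).trans_le (le_closProj hη.1 hη.2)

theorem closProj_anti {ν : Cardinal.{0}} {b b' : Ordinal.{0} → Ordinal.{0}}
    (h : ∀ j < ν.ord, b j ≤ b' j) (γ : Ordinal.{0}) : closProj ν b' γ ≤ closProj ν b γ :=
  csSup_le' fun _ hη => le_closProj (Clos_anti h hη.1) hη.2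

/-- Shelah's club guessing at `ν = θ⁺⁺` for sets of size `θ`. A guess is a sequence of cofinal
sets `c ε` projected to the closure points of some `b`; if it fails at `b'`, it is replaced by
the projection to the closure points of a function above `b` and `b'`. After `θ⁺` corrections
there is a contradiction: each projected point decreases only finitely often, so all `θ` points
projected from a single `c ε` have stabilised at an earlier stage, where the guess was right. -/
theorem club_guessing {θ τ ν : Cardinal.{0}} (hθ : θ.IsRegular) (hτ : τ = Order.succ θ)
    (hν : ν = Order.succ τ) :
    ∃ C : Ordinal.{0} → Set Ordinal.{0}, ∀ b : Ordinal.{0} → Ordinal.{0},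
      (∀ j < ν.ord, b j < ν.ord) → ∃ ε < ν.ord, lift.{1} θ ≤ #(C ε) ∧ C ε ⊆ Clos ν b := by
  classical
  have hθτ : θ < τ := hτ ▸ Order.lt_succ θ
  have hτν : τ < ν := hν ▸ Order.lt_succ τ
  have hτr : τ.IsRegular := hτ ▸ isRegular_succ hθ.aleph0_le
  have hνr : ν.IsRegular := hν ▸ isRegular_succ hτr.aleph0_le
  have hνu : ℵ₀ < ν := hτr.aleph0_le.trans_lt hτν
  have hθν := hθτ.trans hτν
  by_contra hcon
  -- `c γ` is a cofinal subset of `γ` of size at most `θ`, if there is one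
  have hc : ∀ γ : Ordinal.{0}, ∃ c : Set Ordinal.{0}, c ⊆ Iio γ ∧ #c ≤ lift.{1} θ ∧
      ∀ x ⊆ Iio γ, #x ≤ lift.{1} θ → (∀ β < γ, ∃ v ∈ x, β ≤ v) → ∀ β < γ, ∃ v ∈ c, β ≤ v := by
    intro γ
    by_cases hg : ∃ x ⊆ Iio γ, #x ≤ lift.{1} θ ∧ ∀ β < γ, ∃ v ∈ x, β ≤ v
    · obtain ⟨x, h1, h2, h3⟩ := hg
      exact ⟨x, h1, h2, fun _ _ _ _ => h3⟩
    · refine ⟨∅, empty_subset _, ?_, fun x h1 h2 h3 => (hg ⟨x, h1, h2, h3⟩).elim⟩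
      rw [Cardinal.mk_eq_zero]
      exact zero_le
  choose c hc1 hc2 hc3 using hc
  let B := {b : Ordinal.{0} → Ordinal.{0} // ∀ j < ν.ord, b j < ν.ord}
  have hφ : ∀ b : B, ∃ b' : B, ∀ ε < ν.ord, lift.{1} θ ≤ #(closProj ν b.1 '' c ε) →
      ¬ closProj ν b.1 '' c ε ⊆ Clos ν b'.1 := by
    intro b
    by_contra hb
    apply hcon
    refine ⟨fun ε => closProj ν b.1 '' c ε, fun b' hb' => ?_⟩
    by_contra hb''
    exact hb ⟨⟨b', hb'⟩, fun ε hε h1 h2 => hb'' ⟨ε, hε, h1, h2⟩⟩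
  choose φ hφ using hφ
  have hB : Nonempty B := ⟨⟨fun j => j, fun j hj => hj⟩⟩
  obtain ⟨b, hb⟩ := exists_rec (Order.succ τ.ord)
    (fun ζ (x : Ordinal.{0} → B) (a : B) =>
      ∀ ζ' < ζ, ∀ j < ν.ord, (x ζ').1 j ≤ a.1 j ∧ (φ (x ζ')).1 j ≤ a.1 j)
    (fun ζ x x' a hx hR ζ' hζ' => by rw [← hx ζ' hζ']; exact hR ζ' hζ')
    (fun ζ hζ x _ => by
      have : ∀ j, ∃ v, (j < ν.ord → v < ν.ord ∧
          ∀ ζ' < ζ, (x ζ').1 j ≤ v ∧ (φ (x ζ')).1 j ≤ v) := by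
        intro j
        by_cases hj : j < ν.ord
        · obtain ⟨v, hv1, hv2⟩ := exists_strict_bound hνr
            (fun i : Iio ζ => max ((x i.1).1 j) ((φ (x i.1)).1 j))
            (fun i => max_lt ((x i.1).2 j hj) ((φ (x i.1)).2 j hj))
            (mk_Iio_lt ((Order.lt_succ_iff.1 hζ).trans_lt (ord_lt_ord.2 hτν)))
          exact ⟨v, fun _ => ⟨hv1, fun ζ' hζ' =>
            ⟨(le_max_left _ _).trans (hv2 ⟨ζ', hζ'⟩).le,
              (le_max_right _ _).trans (hv2 ⟨ζ', hζ'⟩).le⟩⟩⟩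
        · exact ⟨0, fun h => (hj h).elim⟩
      choose v hv using this
      exact ⟨⟨v, fun j hj => (hv j hj).1⟩, fun ζ' hζ' j hj => (hv j hj).2 ζ' hζ'⟩)
  have hmono : ∀ ξ ≤ τ.ord, ∀ η ≤ ξ, ∀ j < ν.ord, (b η).1 j ≤ (b ξ).1 j := by
    intro ξ hξ η hη j hj
    rcases hη.eq_or_lt with rfl | h
    · exact le_rfl
    · exact (hb ξ (Order.lt_succ_of_le hξ) η h j hj).1
  -- `ε` is a limit of closure points of the last function, of cofinality `θ`
  obtain ⟨y, hy⟩ := exists_rec θ.ord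
    (fun ζ (x : Ordinal.{0} → Ordinal.{0}) a => a ∈ Clos ν (b τ.ord).1 ∧ ∀ ζ' < ζ, x ζ' < a)
    (fun ζ x x' a hx hR => ⟨hR.1, fun ζ' hζ' => by rw [← hx ζ' hζ']; exact hR.2 ζ' hζ'⟩)
    (fun ζ hζ x hx => by
      obtain ⟨β, hβ1, hβ2⟩ := exists_strict_bound hνr (fun i : Iio ζ => x i.1)
        (fun i => (hx i.1 i.2).1.1) (mk_Iio_lt (hζ.trans (ord_lt_ord.2 hθν)))
      obtain ⟨η, hη1, hη2, hη3⟩ := exists_closure hνr hνu (b τ.ord).1 (b τ.ord).2 hβ1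
      exact ⟨η, ⟨hη1, hη3⟩, fun ζ' hζ' => (hβ2 ⟨ζ', hζ'⟩).trans hη2⟩)
  let ε := ssup (y '' Iio θ.ord)
  have hysub : y '' Iio θ.ord ⊆ Iio ν.ord := by
    rintro _ ⟨k, hk, rfl⟩
    exact (hy k hk).1.1
  have hycard : #(y '' Iio θ.ord) ≤ lift.{1} θ := mk_image_le.trans (mk_Iio_ord θ).le
  have hεν : ε < ν.ord := by
    refine ssup_lt hνr hτν hysub (hycard.trans_lt (Cardinal.lift_lt.2 hθτ))
  have hyε : ∀ k < θ.ord, y k < ε := fun k hk => lt_ssup hysub ⟨k, hk, rfl⟩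
  have hεy : ∀ v < ε, ∃ k < θ.ord, v ≤ y k := fun v hv => by
    obtain ⟨_, ⟨k, hk, rfl⟩, h⟩ := exists_le_of_lt_ssup hv
    exact ⟨k, hk, h⟩
  have hccof : ∀ β < ε, ∃ v ∈ c ε, β ≤ v :=
    hc3 ε (y '' Iio θ.ord) (by rintro _ ⟨k, hk, rfl⟩; exact hyε k hk) hycard
      (fun v hv => by
        obtain ⟨k, hk, h⟩ := hεy v hv
        exact ⟨_, ⟨k, hk, rfl⟩, h⟩)
  have hstab : ∀ γ, ∃ ξ < τ.ord, ∀ ξ', ξ ≤ ξ' → ξ' < τ.ord →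
      closProj ν (b ξ').1 γ = closProj ν (b ξ).1 γ := by
    intro γ
    have hne : ((fun ξ => closProj ν (b ξ).1 γ) '' Iio τ.ord).Nonempty :=
      ⟨_, 0, by simpa using hτr.pos.ne'.bot_lt, rfl⟩
    obtain ⟨ξ, hξ, hξ'⟩ := csInf_mem hne
    refine ⟨ξ, hξ, fun ξ' h1 h2 => le_antisymm ?_ ?_⟩
    · exact closProj_anti (hmono ξ' h2.le ξ h1) γ
    · exact hξ'.le.trans (csInf_le' ⟨ξ', h2, rfl⟩)
  choose ξ hξ1 hξ2 using hstab
  obtain ⟨ξ₀, hξ₀, hξ₀'⟩ := exists_strict_bound hτr (fun γ : c ε => ξ γ.1) (fun γ => hξ1 _)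
    ((hc2 ε).trans_lt (Cardinal.lift_lt.2 hθτ))
  have hξs : Order.succ ξ₀ < τ.ord := succ_lt_ord hτr.aleph0_le hξ₀
  refine hφ (b ξ₀) ε hεν ?_ ?_
  · by_contra hlt
    rw [not_le] at hlt
    have hk : ∀ v : closProj ν (b ξ₀).1 '' c ε, ∃ k < θ.ord, v.1 ≤ y k := by
      rintro ⟨_, γ, hγ, rfl⟩
      exact hεy _ ((closProj_le _ _ _).trans_lt (hc1 ε hγ))
    choose k hk1 hk2 using hk
    obtain ⟨k₀, hk₀, hk₀'⟩ := exists_strict_bound hθ k hk1 hlt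
    obtain ⟨γ, hγ, hyγ⟩ := hccof _ (hyε k₀ hk₀)
    have h1 : y k₀ ≤ closProj ν (b ξ₀).1 γ :=
      le_closProj (Clos_anti (hmono _ le_rfl _ hξ₀.le) (hy k₀ hk₀).1) hyγ
    have h2 := hk2 ⟨_, γ, hγ, rfl⟩
    have h3 := (hy k₀ hk₀).2 _ (hk₀' ⟨_, γ, hγ, rfl⟩)
    exact absurd (h1.trans h2) (not_le.2 h3)
  · rintro _ ⟨γ, hγ, rfl⟩
    have h1 := hξ2 γ ξ₀ (hξ₀' ⟨γ, hγ⟩).le hξ₀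
    have h2 := hξ2 γ (Order.succ ξ₀) ((hξ₀' ⟨γ, hγ⟩).le.trans (Order.le_succ _)) hξs
    rw [h1, ← h2]
    refine Clos_anti (fun j hj => ?_) (closProj_mem _ ((hc1 ε hγ).trans hεν))
    exact (hb (Order.succ ξ₀) (hξs.trans (Order.lt_succ _)) ξ₀ (Order.lt_succ _) j hj).2

/-! ### Increasing sequences of functions and good points -/

theorem ssup_lt' {θ : Cardinal.{0}} (hθ : θ.IsRegular) {x : Set Ordinal.{0}}
    (hx : x ⊆ Iio θ.ord) (hc : #x < lift.{1} θ) : ssup x < θ.ord := by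
  obtain ⟨β, h1, h2⟩ := exists_strict_bound hθ (fun i : x => i.1) (fun i => hx i.2) hc
  exact lt_of_le_of_lt (ssup_le fun v hv => h2 ⟨v, hv⟩) h1

theorem ssup_lt_of_cof {δ : Ordinal.{0}} (hδ : ℵ₀ ≤ δ.cof) {x : Set Ordinal.{0}}
    (hx : x ⊆ Iio δ) (hc : #x < lift.{1} δ.cof) : ssup x < δ := by
  obtain ⟨β, h1, h2⟩ := exists_bound (fun i : x => i.1) (fun i => hx i.2) hc
  refine lt_of_le_of_lt (ssup_le fun v hv => ?_)
    ((Ordinal.one_lt_cof_iff.1 (one_lt_aleph0.trans_le hδ)).succ_lt h1)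
  exact Order.lt_succ_of_le (h2 ⟨v, hv⟩)

theorem exists_cofinal_map (δ : Ordinal.{0}) : ∃ e : Ordinal.{0} → Ordinal.{0},
    (∀ i < δ.cof.ord, e i < δ) ∧ ∀ x < δ, ∃ i < δ.cof.ord, x ≤ e i := by
  classical
  obtain ⟨s, hs, hsc⟩ := Order.exists_cof_eq (Iio δ)
  rw [Ordinal.cof_Iio, ← Ordinal.lift_cof, ← mk_Iio_ord, eq_comm] at hsc
  obtain ⟨f⟩ := Cardinal.eq.1 hsc
  refine ⟨fun i => if h : i < δ.cof.ord then (f ⟨i, h⟩).1.1 else 0, fun i hi => ?_, fun x hx => ?_⟩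
  · simp only [dif_pos hi]
    exact (f ⟨i, hi⟩).1.2
  · obtain ⟨y, hy, hxy⟩ := hs ⟨x, hx⟩
    refine ⟨(f.symm ⟨y, hy⟩).1, (f.symm ⟨y, hy⟩).2, ?_⟩
    have h2 : (f.symm ⟨y, hy⟩).1 < δ.cof.ord := (f.symm ⟨y, hy⟩).2
    have h3 : f ⟨(f.symm ⟨y, hy⟩).1, h2⟩ = ⟨y, hy⟩ := f.apply_symm_apply _
    simp only [dif_pos h2]
    rw [h3]
    exact hxy

/-- A cofinal sequence of length `κ = cf(μ)` in `μ`, above `ν₀` and continuous at limits. -/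
theorem exists_seq {κ μ : Cardinal.{0}} (hκ : ℵ₀ ≤ κ) (hcf : μ.ord.cof = κ)
    {ν₀ : Ordinal.{0}} (hν₀ : ν₀ < μ.ord) :
    ∃ o : Ordinal.{0} → Ordinal.{0}, (∀ i j, i ≤ j → j < κ.ord → o i ≤ o j) ∧
      (∀ i, ν₀ ≤ o i) ∧ (∀ i < κ.ord, o i < μ.ord) ∧ (∀ x < μ.ord, ∃ i < κ.ord, x < o i) ∧
      ∀ i < κ.ord, 0 < i → (∀ j < i, Order.succ j < i) → ∀ v < o i, ∃ j < i, v < o j := by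
  obtain ⟨e, he1, he2⟩ := exists_cofinal_map μ.ord
  rw [hcf] at he1 he2
  have hsub : ∀ i ≤ κ.ord, e '' Iio i ⊆ Iio μ.ord := by
    rintro i hi _ ⟨j, hj, rfl⟩
    exact he1 j (lt_of_lt_of_le hj hi)
  have hlt : ∀ i ≤ κ.ord, ∀ j < i, e j < ssup (e '' Iio i) := fun i hi j hj =>
    lt_ssup (hsub i hi) ⟨j, hj, rfl⟩
  refine ⟨fun i => max ν₀ (ssup (e '' Iio i)), ?_, fun i => le_max_left _ _, ?_, ?_, ?_⟩
  · intro i j hij hj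
    refine max_le_max le_rfl (ssup_le ?_)
    rintro _ ⟨k, hk, rfl⟩
    exact hlt j hj.le k (lt_of_lt_of_le hk hij)
  · intro i hi
    refine max_lt hν₀ (ssup_lt_of_cof (by rwa [hcf]) (hsub i hi.le) ?_)
    rw [hcf]
    exact lt_of_le_of_lt mk_image_le (mk_Iio_lt hi)
  · intro x hx
    obtain ⟨i, hi, hxi⟩ := he2 x hx
    have hs := succ_lt_ord hκ hi
    exact ⟨_, hs, lt_of_le_of_lt hxi (lt_of_lt_of_le (hlt _ hs.le i (Order.lt_succ i))
      (le_max_right _ _))⟩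
  · intro i hi h0 hlim v hv
    rcases lt_max_iff.1 hv with h | h
    · exact ⟨0, h0, lt_of_lt_of_le h (le_max_left _ _)⟩
    · obtain ⟨_, ⟨j, hj, rfl⟩, hvj⟩ := exists_le_of_lt_ssup h
      have hs := hlim j hj
      exact ⟨_, hs, lt_of_le_of_lt hvj (lt_of_lt_of_le (hlt _ (hs.trans hi).le j (Order.lt_succ j))
        (le_max_right _ _))⟩

/-- A sequence `g` of length `μ⁺` of functions on `κ`, bounded by `i ↦ |o i|⁺`, which is
increasing modulo bounded subsets of `κ` and, at points `δ` of cofinality `ν`, dominates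
everywhere the members of the sequence along a club of `δ`. -/
theorem exists_increasing {κ μ ν : Cardinal.{0}} (hν : ν.IsRegular)
    {o : Ordinal.{0} → Ordinal.{0}} (hmono : ∀ i j, i ≤ j → j < κ.ord → o i ≤ o j)
    (hνo : ∀ i, ν.ord ≤ o i) (hcofin : ∀ x < μ.ord, ∃ i < κ.ord, x < o i) :
    ∃ g : Ordinal.{0} → Ordinal.{0} → Ordinal.{0},
      (∀ α < (Order.succ μ).ord, ∀ i, g α i < (Order.succ (o i).card).ord) ∧
      (∀ α < (Order.succ μ).ord, ∀ β < α, ∃ z < κ.ord, ∀ i, z ≤ i → i < κ.ord →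
        g β i < g α i) ∧
      ∀ δ < (Order.succ μ).ord, δ.cof = ν → ∃ e : Ordinal.{0} → Ordinal.{0},
        (∀ ε < ν.ord, e ε < δ) ∧ (∀ x < δ, ∃ ε < ν.ord, x ≤ e ε) ∧
        ∀ ε < ν.ord, ∀ i, g (ssup (e '' Iio ε)) i < g δ i := by
  classical
  have hq : ∀ α : Ordinal.{0}, ∃ q : Ordinal.{0} → Ordinal.{0}, α < (Order.succ μ).ord →
      InjOn q (Iio α) ∧ MapsTo q (Iio α) (Iio μ.ord) := by
    intro α
    by_cases hα : α < (Order.succ μ).ord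
    · obtain ⟨q, h1, h2⟩ := exists_injOn (δ := α) (δ' := μ.ord)
        (by rw [card_ord]; exact Order.lt_succ_iff.1 (Cardinal.lt_ord.1 hα))
      exact ⟨q, fun _ => ⟨h1, h2⟩⟩
    · exact ⟨id, fun h => (hα h).elim⟩
  choose q hq using hq
  choose e he1 he2 using exists_cofinal_map
  let P1 : Ordinal.{0} → Ordinal.{0} → Set Ordinal.{0} := fun α i => {β | β < α ∧ q α β < o i}
  let P2 : Ordinal.{0} → Set Ordinal.{0} := fun α =>
    {β | β < α ∧ ∃ ε < ν.ord, β = ssup (e α '' Iio ε)}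
  let P : Ordinal.{0} → Ordinal.{0} → Set Ordinal.{0} := fun α i => P1 α i ∪ P2 α
  have hPlt : ∀ α i, ∀ β ∈ P α i, β < α := by
    rintro α i β (h | h)
    · exact h.1
    · exact h.1
  have hoinf : ∀ i, ν ≤ (o i).card := fun i => by
    have := Ordinal.card_le_card (hνo i)
    rwa [card_ord] at this
  have hPcard : ∀ α < (Order.succ μ).ord, ∀ i, #(P α i) ≤ lift.{1} (o i).card := by
    intro α hα i
    have hinf : ℵ₀ ≤ lift.{1} (o i).card := by
      exact Cardinal.aleph0_le_lift.2 (hν.aleph0_le.trans (hoinf i))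
    refine (mk_union_le _ _).trans (add_le_of_le hinf ?_ ?_)
    · rw [← Cardinal.mk_Iio_ordinal, ← mk_image_eq_of_injOn (q α) (P1 α i)
        ((hq α hα).1.mono fun β hβ => hβ.1)]
      apply mk_le_mk_of_subset
      rintro _ ⟨β, hβ, rfl⟩
      exact hβ.2
    · have : P2 α ⊆ (fun ε => ssup (e α '' Iio ε)) '' Iio ν.ord := by
        rintro β ⟨-, ε, hε, rfl⟩
        exact ⟨ε, hε, rfl⟩
      refine (mk_le_mk_of_subset this).trans (mk_image_le.trans ?_)
      rw [mk_Iio_ord]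
      exact Cardinal.lift_le.2 (hoinf i)
  obtain ⟨g, hg⟩ := exists_rec (Order.succ μ).ord
    (fun ζ (x : Ordinal.{0} → Ordinal.{0} → Ordinal.{0}) a =>
      ∀ i, a i = ssup ((fun β => x β i) '' P ζ i))
    (fun ζ x x' a hx hR i => by
      rw [hR i]
      congr 1
      exact image_congr fun β hβ => by rw [hx β (hPlt ζ i β hβ)])
    (fun ζ _ x _ => ⟨_, fun i => rfl⟩)
  have hbd : ∀ α < (Order.succ μ).ord, ∀ i, g α i < (Order.succ (o i).card).ord := by
    intro α
    induction α using Ordinal.lt_wf.induction with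
    | _ α ih =>
      intro hα i
      rw [hg α hα i]
      refine ssup_lt' (isRegular_succ (hν.aleph0_le.trans (hoinf i))) ?_ ?_
      · rintro _ ⟨β, hβ, rfl⟩
        have := hPlt α i β hβ
        exact ih β this (this.trans hα) i
      · exact lt_of_le_of_lt mk_image_le (lt_of_le_of_lt (hPcard α hα i)
          (Cardinal.lift_lt.2 (Order.lt_succ _)))
  have hglt : ∀ α < (Order.succ μ).ord, ∀ i, ∀ β ∈ P α i, g β i < g α i := by
    intro α hα i β hβ
    rw [hg α hα i]
    refine lt_ssup (t := (Order.succ (o i).card).ord) ?_ ⟨β, hβ, rfl⟩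
    rintro _ ⟨β', hβ', rfl⟩
    exact hbd β' ((hPlt α i β' hβ').trans hα) i
  refine ⟨g, hbd, ?_, ?_⟩
  · intro α hα β hβ
    obtain ⟨z, hz, hz'⟩ := hcofin (q α β) ((hq α hα).2 hβ)
    exact ⟨z, hz, fun i hi hiκ => hglt α hα i β
      (Or.inl ⟨hβ, lt_of_lt_of_le hz' (hmono z i hi hiκ)⟩)⟩
  · intro δ hδ hcof
    have h1 := he1 δ
    have h2 := he2 δ
    rw [hcof] at h1 h2
    refine ⟨e δ, h1, h2, fun ε hε i => hglt δ hδ i _ (Or.inr ⟨?_, ε, hε, rfl⟩)⟩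
    refine ssup_lt_of_cof (by rw [hcof]; exact hν.aleph0_le) ?_ ?_
    · rintro _ ⟨k, hk, rfl⟩
      exact h1 k (lt_trans hk hε)
    · rw [hcof]
      exact lt_of_le_of_lt mk_image_le (mk_Iio_lt hε)

/-- Existence of good points, by club guessing: every unbounded subset of `μ⁺` contains `κ⁺` points along
which the sequence `g` is increasing everywhere beyond indices `z` depending on one point only. -/
theorem exists_good_subset {κ ν M : Cardinal.{0}} (hκ : κ.IsRegular)
    (hν : ν = Order.succ (Order.succ (Order.succ κ))) (hM : M.IsRegular) (hνM : ν < M)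
    {g : Ordinal.{0} → Ordinal.{0} → Ordinal.{0}}
    (hg1 : ∀ α < M.ord, ∀ β < α, ∃ z < κ.ord, ∀ i, z ≤ i → i < κ.ord → g β i < g α i)
    (hg2 : ∀ δ < M.ord, δ.cof = ν → ∃ e : Ordinal.{0} → Ordinal.{0},
        (∀ ε < ν.ord, e ε < δ) ∧ (∀ x < δ, ∃ ε < ν.ord, x ≤ e ε) ∧
        ∀ ε < ν.ord, ∀ i, g (ssup (e '' Iio ε)) i < g δ i)
    {T : Set Ordinal.{0}} (hT : T ⊆ Iio M.ord) (hTu : ∀ β < M.ord, ∃ α ∈ T, β ≤ α) :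
    ∃ (C : Set Ordinal.{0}) (x z : Ordinal.{0} → Ordinal.{0}), lift.{1} (Order.succ κ) ≤ #C ∧
      (∀ η ∈ C, x η ∈ T) ∧ (∀ η ∈ C, z η < κ.ord) ∧
      ∀ η ∈ C, ∀ τ ∈ C, η < τ → ∀ i < κ.ord, z η ≤ i → z τ ≤ i → g (x η) i < g (x τ) i := by
  classical
  have hκ1 := isRegular_succ hκ.aleph0_le
  have hνr : ν.IsRegular := hν ▸ isRegular_succ (isRegular_succ hκ1.aleph0_le).aleph0_le
  have hκ0 : (0 : Ordinal.{0}) < κ.ord := by simpa using hκ.pos.ne'.bot_lt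
  obtain ⟨G, hG⟩ := club_guessing hκ1 rfl hν
  let Hyp : Ordinal.{0} → Ordinal.{0} → (Ordinal.{0} → Ordinal.{0}) → Ordinal.{0} → Prop :=
    fun ζ ε x α => ∃ z < κ.ord, ∀ i, z ≤ i → i < κ.ord → ∀ η ∈ G ε, η ≤ ζ →
      g (ssup (x '' Iio η)) i ≤ g α i
  have hHyploc : ∀ ζ ε x x' α, (∀ ζ' < ζ, x ζ' = x' ζ') → Hyp ζ ε x α → Hyp ζ ε x' α := by
    rintro ζ ε x x' α hx ⟨z, hz, h⟩
    refine ⟨z, hz, fun i h1 h2 η hη hηζ => ?_⟩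
    have : x' '' Iio η = x '' Iio η :=
      image_congr fun k hk => (hx k (lt_of_lt_of_le hk hηζ)).symm
    rw [this]
    exact h i h1 h2 η hη hηζ
  -- The next point dominates the suprema guessed so far whenever this is possible.
  obtain ⟨x, hx⟩ := exists_rec ν.ord
    (fun ζ (x : Ordinal.{0} → Ordinal.{0}) a => a ∈ T ∧ (∀ ζ' < ζ, x ζ' < a) ∧
      ∀ ε < ν.ord, (∃ α < M.ord, Hyp ζ ε x α) → Hyp ζ ε x a)
    (fun ζ x x' a hx hR => ⟨hR.1, fun ζ' hζ' => by rw [← hx ζ' hζ']; exact hR.2.1 ζ' hζ',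
      fun ε hε hα => hHyploc ζ ε x x' a hx (hR.2.2 ε hε (by
        obtain ⟨α, h1, h2⟩ := hα
        exact ⟨α, h1, hHyploc ζ ε x' x α (fun k hk => (hx k hk).symm) h2⟩))⟩)
    (fun ζ hζ x hx => by
      have hα : ∀ ε, ∃ α < M.ord, (∃ α < M.ord, Hyp ζ ε x α) → Hyp ζ ε x α := by
        intro ε
        by_cases h : ∃ α < M.ord, Hyp ζ ε x α
        · obtain ⟨α, h1, h2⟩ := h
          exact ⟨α, h1, fun _ => h2⟩
        · exact ⟨0, by simpa using hM.pos.ne'.bot_lt, fun h' => (h h').elim⟩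
      choose α hα1 hα2 using hα
      obtain ⟨β₁, hβ₁, hβ₁'⟩ := exists_strict_bound hM (fun ε : Iio ν.ord => α ε.1)
        (fun ε => hα1 _) (by rw [mk_Iio_ord]; exact Cardinal.lift_lt.2 hνM)
      obtain ⟨β₂, hβ₂, hβ₂'⟩ := exists_strict_bound hM (fun k : Iio ζ => x k.1)
        (fun k => hT (hx k.1 k.2).1) (mk_Iio_lt (hζ.trans (ord_lt_ord.2 hνM)))
      obtain ⟨a, ha, hβa⟩ := hTu _ (max_lt hβ₁ hβ₂)
      refine ⟨a, ha, fun k hk => lt_of_lt_of_le (hβ₂' ⟨k, hk⟩) ((le_max_right _ _).trans hβa),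
        fun ε hε h => ?_⟩
      have hαa : α ε < a := lt_of_lt_of_le (hβ₁' ⟨ε, hε⟩) ((le_max_left _ _).trans hβa)
      obtain ⟨z, hz, hz'⟩ := hα2 ε h
      obtain ⟨z', hzκ, hzz⟩ := hg1 a (hT ha) _ hαa
      refine ⟨max z z', max_lt hz hzκ, fun i hi hiκ η hη hηζ => ?_⟩
      exact (hz' i ((le_max_left _ _).trans hi) hiκ η hη hηζ).trans
        (hzz i ((le_max_right _ _).trans hi) hiκ).le)
  have hxM : ∀ k < ν.ord, x k < M.ord := fun k hk => hT (hx k hk).1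
  have hxs : x '' Iio ν.ord ⊆ Iio M.ord := by
    rintro _ ⟨k, hk, rfl⟩
    exact hxM k hk
  let δ := ssup (x '' Iio ν.ord)
  have hxδ : ∀ k < ν.ord, x k < δ := fun k hk => lt_ssup hxs ⟨k, hk, rfl⟩
  have hδx : ∀ v < δ, ∃ k < ν.ord, v ≤ x k := fun v hv => by
    obtain ⟨_, ⟨k, hk, rfl⟩, h⟩ := exists_le_of_lt_ssup hv
    exact ⟨k, hk, h⟩
  have hδM : δ < M.ord := ssup_lt' hM hxs (lt_of_le_of_lt mk_image_le
    (by rw [mk_Iio_ord]; exact Cardinal.lift_lt.2 hνM))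
  have hδcof : δ.cof = ν := by
    have hsm : StrictMono (fun i : Iio ν.ord => x i.1) := fun i j hij => (hx j.1 j.2).2.1 i.1 hij
    have h1 := Ordinal.cof_iSup_Iio_add_one hsm
    rw [hνr.cof_ord] at h1
    rw [← h1]
    congr 1
    simp only [δ, ssup, iSup]
    congr 1
    ext v
    simp only [mem_image, mem_range, Subtype.exists, Order.succ_eq_add_one]
    constructor
    · rintro ⟨_, ⟨k, hk, rfl⟩, rfl⟩
      exact ⟨k, hk, rfl⟩
    · rintro ⟨k, hk, rfl⟩
      exact ⟨_, ⟨k, hk, rfl⟩, rfl⟩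
  obtain ⟨e, he1, he2, he3⟩ := hg2 δ hδM hδcof
  have hb : ∀ k, ∃ m, k < ν.ord → m < ν.ord ∧ (∃ ε ≤ m, x k ≤ e ε) ∧ ∃ ε ≤ m, e k ≤ x ε := by
    intro k
    by_cases hk : k < ν.ord
    · obtain ⟨ε, hε, h1⟩ := he2 _ (hxδ k hk)
      obtain ⟨ε', hε', h2⟩ := hδx _ (he1 k hk)
      exact ⟨max ε ε', fun _ => ⟨max_lt hε hε', ⟨ε, le_max_left _ _, h1⟩,
        ⟨ε', le_max_right _ _, h2⟩⟩⟩
    · exact ⟨0, fun h => (hk h).elim⟩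
  choose b hb using hb
  obtain ⟨ε, hε, hCcard, hCb⟩ := hG b fun j hj => (hb j hj).1
  have hes : ∀ η < ν.ord, e '' Iio η ⊆ Iio δ := by
    rintro η hη _ ⟨k, hk, rfl⟩
    exact he1 k (lt_trans hk hη)
  have hxs' : ∀ η < ν.ord, x '' Iio η ⊆ Iio δ := by
    rintro η hη _ ⟨k, hk, rfl⟩
    exact hxδ k (lt_trans hk hη)
  have heq : ∀ η ∈ G ε, ssup (x '' Iio η) = ssup (e '' Iio η) := by
    intro η hη
    obtain ⟨hην, hηb⟩ := hCb hη
    apply le_antisymm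
    · apply ssup_le
      rintro _ ⟨k, hk, rfl⟩
      obtain ⟨-, ⟨m, hm, hkm⟩, -⟩ := hb k (lt_trans hk hην)
      exact lt_of_le_of_lt hkm (lt_ssup (hes η hην) ⟨m, lt_of_le_of_lt hm (hηb k hk), rfl⟩)
    · apply ssup_le
      rintro _ ⟨k, hk, rfl⟩
      obtain ⟨-, -, ⟨m, hm, hkm⟩⟩ := hb k (lt_trans hk hην)
      exact lt_of_le_of_lt hkm (lt_ssup (hxs' η hην) ⟨m, lt_of_le_of_lt hm (hηb k hk), rfl⟩)
  have hz1 : ∀ ζ, ∃ z, ζ ∈ G ε → z < κ.ord ∧ ∀ i, z ≤ i → i < κ.ord → ∀ η ∈ G ε, η ≤ ζ →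
      g (ssup (x '' Iio η)) i ≤ g (x ζ) i := by
    intro ζ
    by_cases hζ : ζ ∈ G ε
    · obtain ⟨z, h1, h2⟩ := (hx ζ (hCb hζ).1).2.2 ε hε ⟨δ, hδM, 0, hκ0, fun i _ _ η hη _ => by
        rw [heq η hη]
        exact (he3 η (hCb hη).1 i).le⟩
      exact ⟨z, fun _ => ⟨h1, h2⟩⟩
    · exact ⟨0, fun h => (hζ h).elim⟩
  choose z1 hz1 using hz1
  -- `g (x η)` lies below `g` at the supremum up to the next point of the guessed club
  have hz2 : ∀ η, ∃ z < κ.ord, η ∈ G ε → (G ε ∩ Ioi η).Nonempty → ∀ i, z ≤ i → i < κ.ord →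
      g (x η) i < g (ssup (x '' Iio (sInf (G ε ∩ Ioi η)))) i := by
    intro η
    by_cases h : η ∈ G ε ∧ (G ε ∩ Ioi η).Nonempty
    · obtain ⟨h1, h2⟩ := csInf_mem h.2
      obtain ⟨z, hz, hz'⟩ := hg1 (ssup (x '' Iio (sInf (G ε ∩ Ioi η))))
        (lt_of_le_of_lt (ssup_le (hxs' _ (hCb h1).1)) hδM) (x η)
        (lt_ssup (hxs' _ (hCb h1).1) ⟨η, h2, rfl⟩)
      exact ⟨z, hz, fun _ _ => hz'⟩
    · exact ⟨0, hκ0, fun h1 h2 => (h ⟨h1, h2⟩).elim⟩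
  choose z2 hz2 hz2' using hz2
  refine ⟨G ε, x, fun η => max (z1 η) (z2 η), hCcard, fun η hη => (hx η (hCb hη).1).1,
    fun η hη => max_lt (hz1 η hη).1 (hz2 η), ?_⟩
  intro η hη τ hτ hητ i hi h1 h2
  have hne : (G ε ∩ Ioi η).Nonempty := ⟨τ, hτ, hητ⟩
  exact lt_of_lt_of_le (hz2' η hη hne i ((le_max_right _ _).trans h1) hi)
    ((hz1 τ hτ).2 i ((le_max_left _ _).trans h2) hi _ (csInf_mem hne).1
      (csInf_le' ⟨hτ, hητ⟩))

/-! ### Cardinals of cofinality `κ` -/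

/-- A form of Fodor's lemma: if `v i < o i` for all `i` in a stationary `W ⊆ κ`, where `o` is
continuous, then a single member of a family covering each `o j` contains `v i` for unboundedly
many `i ∈ W`. -/
theorem exists_unbounded_mem {κ : Cardinal.{0}} (hκ : κ.IsRegular)
    {o : Ordinal.{0} → Ordinal.{0}}
    (ho : ∀ i < κ.ord, 0 < i → (∀ j < i, Order.succ j < i) → ∀ v < o i, ∃ j < i, v < o j)
    {X : Set (Set Ordinal.{0})}
    (hX : ∀ j < κ.ord, ∀ a ⊆ Iio (o j), #a ≤ lift.{1} κ →
      ∃ Q, Q ⊆ X ∧ #Q < lift.{1} κ ∧ a ⊆ ⋃₀ Q)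
    {W : Set Ordinal.{0}}
    (hW : ∀ b : Ordinal.{0} → Ordinal.{0}, (∀ j < κ.ord, b j < κ.ord) →
      ∃ i ∈ W, 0 < i ∧ i ∈ Clos κ b)
    {v : Ordinal.{0} → Ordinal.{0}} (hv : ∀ i ∈ W, v i < o i) :
    ∃ y ∈ X, ∀ k < κ.ord, ∃ i < κ.ord, k < i ∧ i ∈ W ∧ v i ∈ y := by
  classical
  -- pressing down: unboundedly many `v i` lie below a single `o j`
  have h1 : ∃ j < κ.ord, ∀ k < κ.ord, ∃ i < κ.ord, k < i ∧ i ∈ W ∧ v i < o j := by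
    by_contra hcon
    have hk : ∀ j, ∃ k, j < κ.ord → k < κ.ord ∧ ∀ i < κ.ord, k < i → i ∈ W → ¬ v i < o j := by
      intro j
      by_cases hj : j < κ.ord
      · by_contra hcon'
        refine hcon ⟨j, hj, fun k hk => ?_⟩
        by_contra hi
        exact hcon' ⟨k, fun _ => ⟨hk, fun i h1 h2 h3 h4 => hi ⟨i, h1, h2, h3, h4⟩⟩⟩
      · exact ⟨0, fun h => (hj h).elim⟩
    choose k hk using hk
    obtain ⟨i, hiW, hi0, hiκ, hi⟩ := hW (fun j => max (k j) (Order.succ j))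
      (fun j hj => max_lt (hk j hj).1 (succ_lt_ord hκ.aleph0_le hj))
    obtain ⟨j, hj, hvj⟩ := ho i hiκ hi0
      (fun j hj => (le_max_right _ _).trans_lt (hi j hj)) (v i) (hv i hiW)
    exact (hk j (hj.trans hiκ)).2 i hiκ ((le_max_left _ _).trans_lt (hi j hj)) hiW hvj
  -- fewer than `κ` members of `X` cover these `v i`, so one of them is used unboundedly often
  obtain ⟨j, hj, hju⟩ := h1
  obtain ⟨Q, hQX, hQ, hcov⟩ := hX j hj (v '' {i | i < κ.ord ∧ i ∈ W ∧ v i < o j})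
    (by rintro _ ⟨i, hi, rfl⟩; exact hi.2.2)
    (mk_image_le.trans ((mk_le_mk_of_subset fun i hi => hi.1).trans (mk_Iio_ord κ).le))
  by_contra hcon
  have hk : ∀ y : Q, ∃ k < κ.ord, ∀ i < κ.ord, k < i → i ∈ W → v i ∉ y.1 := by
    intro y
    by_contra hcon'
    refine hcon ⟨y.1, hQX y.2, fun k hk => ?_⟩
    by_contra hi
    exact hcon' ⟨k, hk, fun i h1 h2 h3 h4 => hi ⟨i, h1, h2, h3, h4⟩⟩
  choose k hk1 hk2 using hk
  obtain ⟨k₀, hk₀, hk₀'⟩ := exists_strict_bound hκ k hk1 hQ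
  obtain ⟨i, hi, hki, hiW, hvi⟩ := hju k₀ hk₀
  obtain ⟨y, hy, hviy⟩ := hcov ⟨i, ⟨hi, hiW, hvi⟩, rfl⟩
  exact hk2 ⟨y, hy⟩ i hi ((hk₀' _).trans hki) hiW hviy

theorem ord_pos_of_isRegular {κ : Cardinal.{0}} (hκ : κ.IsRegular) : (0 : Ordinal.{0}) < κ.ord := by
  simpa using hκ.pos.ne'.bot_lt

/-- The case of the induction in which `μ > κ⁺⁺⁺` has cofinality `κ`. The `μ⁺` sets covering `μ`
are decoded from a pair `(α, y)`, where `α < μ⁺` and `y` belongs to the union `X` of families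
covering a cofinal sequence `o i` in `μ`. Given `a`, write it as an increasing union of sets `a' i`
of size less than `κ`, and let `f i < |o i|⁺` be a code of a set in the `i`-th cofinal family
which contains `a' i`.

If `f i ≤ g α i` for stationarily many `i`, then Fodor's lemma produces `y ∈ X` which contains the
codes of `f i` below `g α i` for unboundedly many `i`, and `(α, y)` covers `a`. If there is no
such `α`, the same argument codes `g α i` below `f i`, and yields `y α` for each `α < μ⁺`. The same
`y₀` occurs unboundedly often, hence at `κ⁺` points along which `g` is increasing beyond indices
less than `κ`. So at some `i` there are `κ⁺` many values `g α i` coded in `y₀`, a set of size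
`κ`. -/
theorem CovLe.of_cof_eq {κ μ ν : Cardinal.{0}} (hκ : κ.IsRegular) (hunc : ℵ₀ < κ)
    (hcf : μ.ord.cof = κ) (hν : ν = Order.succ (Order.succ (Order.succ κ))) (hνμ : ν < μ)
    (hcov : ∀ δ < μ.ord, CovLe κ δ μ)
    (hfam : ∀ θ : Cardinal.{0}, θ.IsRegular → κ < θ → θ ≤ μ →
      ∃ F : Ordinal.{0} → Set Ordinal.{0}, (∀ γ, #(F γ) < lift.{1} κ) ∧
        ∀ b ⊆ Iio θ.ord, #b < lift.{1} κ → ∃ γ < θ.ord, b ⊆ F γ) :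
    CovLe κ μ.ord (Order.succ μ) := by
  classical
  have hκ0 : ℵ₀ ≤ lift.{1} κ := by simpa using hκ.aleph0_le
  have hκν : κ < ν := by
    rw [hν]
    exact (Order.lt_succ κ).trans ((Order.lt_succ _).trans (Order.lt_succ _))
  have hκμ : κ < μ := hκν.trans hνμ
  have hμ : ℵ₀ ≤ μ := hunc.le.trans hκμ.le
  have hMr : (Order.succ μ).IsRegular := isRegular_succ hμ
  have hνr : ν.IsRegular := hν ▸ isRegular_succ (isRegular_succ
    (isRegular_succ hκ.aleph0_le).aleph0_le).aleph0_le
  obtain ⟨o, hmono, hνo, hoμ, hocof, hocont⟩ := exists_seq hκ.aleph0_le hcf (ord_lt_ord.2 hνμ)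
  obtain ⟨g, hg0, hg1, hg2⟩ := exists_increasing (μ := μ) hνr hmono hνo hocof
  have hoinf : ∀ i, ν ≤ (o i).card := fun i => by
    have := Ordinal.card_le_card (hνo i)
    rwa [card_ord] at this
  -- a family `X` of size `μ` covering each `o j`
  have hX' : ∀ j, ∃ X : Set (Set Ordinal.{0}), j < κ.ord → #X ≤ lift.{1} μ ∧
      (∀ y ∈ X, #y ≤ lift.{1} κ) ∧ ∀ a : Set Ordinal.{0}, a ⊆ Iio (o j) → #a ≤ lift.{1} κ →
      ∃ Q, Q ⊆ X ∧ #Q < lift.{1} κ ∧ a ⊆ ⋃₀ Q := by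
    intro j
    by_cases hj : j < κ.ord
    · obtain ⟨X, hX⟩ := hcov (o j) (hoμ j hj)
      exact ⟨X, fun _ => hX⟩
    · exact ⟨∅, fun h => (hj h).elim⟩
  choose X' hX' using hX'
  obtain ⟨X, hXdef⟩ : ∃ X, X = ⋃ j ∈ Iio κ.ord, X' j := ⟨_, rfl⟩
  have hXcard : #X ≤ lift.{1} μ := by
    rw [hXdef]
    refine mk_biUnion_le_of _ _ (by simpa using hμ) ?_ (fun j hj => (hX' j hj).1)
    rw [mk_Iio_ord]
    exact Cardinal.lift_le.2 hκμ.le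
  have hXsz : ∀ y ∈ X, #y ≤ lift.{1} κ := by
    intro y hy
    rw [hXdef] at hy
    simp only [mem_iUnion] at hy
    obtain ⟨j, hj, hy⟩ := hy
    exact (hX' j hj).2.1 y hy
  have hXcov : ∀ j < κ.ord, ∀ a ⊆ Iio (o j), #a ≤ lift.{1} κ →
      ∃ Q, Q ⊆ X ∧ #Q < lift.{1} κ ∧ a ⊆ ⋃₀ Q := by
    intro j hj a ha hac
    obtain ⟨Q, h1, h2, h3⟩ := (hX' j hj).2.2 a ha hac
    refine ⟨Q, h1.trans ?_, h2, h3⟩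
    rw [hXdef]
    exact subset_biUnion_of_mem (u := X') hj
  clear hXdef
  -- cofinal families in `P_κ(|o i|⁺)`, indexed by `|o i|⁺`
  have hF : ∀ i, ∃ F : Ordinal.{0} → Set Ordinal.{0}, i < κ.ord →
      (∀ γ, #(F γ) < lift.{1} κ) ∧ ∀ b ⊆ Iio (Order.succ (o i).card).ord, #b < lift.{1} κ →
        ∃ γ < (Order.succ (o i).card).ord, b ⊆ F γ := by
    intro i
    by_cases hi : i < κ.ord
    · obtain ⟨F, hF⟩ := hfam (Order.succ (o i).card)
        (isRegular_succ (hνr.aleph0_le.trans (hoinf i)))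
        (hκν.trans_le ((hoinf i).trans (Order.le_succ _)))
        (Order.succ_le_of_lt (Cardinal.lt_ord.1 (hoμ i hi)))
      exact ⟨F, fun _ => hF⟩
    · exact ⟨fun _ => ∅, fun h => (hi h).elim⟩
  choose F hF1 hF2 using hF
  -- `E i γ` codes the ordinals up to `γ` as elements of `o i`
  have hE : ∀ i γ : Ordinal.{0}, ∃ E : Ordinal.{0} → Ordinal.{0},
      γ < (Order.succ (o i).card).ord →
      InjOn E (Iio (Order.succ γ)) ∧ MapsTo E (Iio (Order.succ γ)) (Iio (o i)) := by
    intro i γ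
    by_cases hγ : γ < (Order.succ (o i).card).ord
    · have h := succ_lt_ord (isRegular_succ (hνr.aleph0_le.trans (hoinf i))).aleph0_le hγ
      obtain ⟨E, hE⟩ := exists_injOn (Order.lt_succ_iff.1 (Cardinal.lt_ord.1 h))
      exact ⟨E, fun _ => hE⟩
    · exact ⟨id, fun h => (hγ h).elim⟩
  choose E hE using hE
  have hEo : ∀ i γ₀, γ₀ < (Order.succ (o i).card).ord → ∀ γ ≤ γ₀, E i γ₀ γ < o i :=
    fun i γ₀ h γ hγ => (hE i γ₀ h).2 (Order.lt_succ_of_le hγ)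
  -- the ordinals up to `γ₀` whose codes belong to `y`
  let B : Ordinal.{0} → Ordinal.{0} → Set Ordinal.{0} → Set Ordinal.{0} :=
    fun i γ₀ y => {γ | γ ≤ γ₀ ∧ E i γ₀ γ ∈ y}
  have hB : ∀ i γ₀, γ₀ < (Order.succ (o i).card).ord → ∀ y ∈ X, #(B i γ₀ y) ≤ lift.{1} κ := by
    intro i γ₀ h y hy
    rw [← mk_image_eq_of_injOn (E i γ₀) (B i γ₀ y)
      ((hE i γ₀ h).1.mono fun γ hγ => Order.lt_succ_of_le hγ.1)]
    refine (mk_le_mk_of_subset ?_).trans (hXsz y hy)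
    rintro _ ⟨γ, hγ, rfl⟩
    exact hγ.2
  let Y : Ordinal.{0} → Set Ordinal.{0} → Set Ordinal.{0} :=
    fun α y => ⋃ i ∈ Iio κ.ord, ⋃ γ ∈ B i (g α i) y, F i γ
  refine ⟨(fun q => Y q.1 q.2) '' (Iio (Order.succ μ).ord ×ˢ X), ?_, ?_, ?_⟩
  · refine mk_image_le.trans ?_
    rw [mk_setProd, mk_Iio_ord]
    exact (mul_le_mul' le_rfl (hXcard.trans (Cardinal.lift_le.2 (Order.le_succ μ)))).trans
      (mul_eq_self (Cardinal.aleph0_le_lift.2 hMr.aleph0_le)).le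
  · rintro _ ⟨⟨α, y⟩, ⟨hα, hy⟩, rfl⟩
    refine mk_biUnion_le_of _ _ hκ0 (mk_Iio_ord κ).le fun i hi => ?_
    exact mk_biUnion_le_of _ _ hκ0 (hB i _ (hg0 α hα i) y hy) fun γ _ => (hF1 i hi γ).le
  intro a ha hac
  rw [← mk_Iio_ord] at hac
  obtain ⟨r⟩ := hac
  let a' : Ordinal.{0} → Set Ordinal.{0} := fun i => {x | x < o i ∧ ∃ h : x ∈ a, (r ⟨x, h⟩).1 < i}
  have ha'c : ∀ i < κ.ord, #(a' i) < lift.{1} κ := by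
    intro i hi
    refine lt_of_le_of_lt ?_ (mk_Iio_lt hi)
    refine mk_le_of_injective (f := fun x : a' i => (⟨(r ⟨x.1, x.2.2.1⟩).1, x.2.2.2⟩ : Iio i)) ?_
    intro x x' h
    have h1 : (r ⟨x.1, x.2.2.1⟩).1 = (r ⟨x'.1, x'.2.2.1⟩).1 :=
      Subtype.mk.inj h
    have h2 := r.injective (Subtype.ext h1)
    exact Subtype.ext (Subtype.mk.inj h2)
  have ha'o : ∀ i, a' i ⊆ Iio (Order.succ (o i).card).ord := fun i x hx =>
    lt_trans hx.1 (Cardinal.lt_ord.2 (Order.lt_succ _))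
  have ha'ev : ∀ x ∈ a, ∃ k < κ.ord, ∀ i < κ.ord, k < i → x ∈ a' i := by
    intro x hx
    obtain ⟨k, hk, hxk⟩ := hocof x (ha hx)
    refine ⟨max k (r ⟨x, hx⟩).1, max_lt hk (r ⟨x, hx⟩).2, fun i hi hki => ⟨?_, hx, ?_⟩⟩
    · exact lt_of_lt_of_le hxk (hmono k i ((le_max_left _ _).trans hki.le) hi)
    · exact (le_max_right _ _).trans_lt hki
  have hf : ∀ i, ∃ f, i < κ.ord → f < (Order.succ (o i).card).ord ∧ a' i ⊆ F i f := by
    intro i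
    by_cases hi : i < κ.ord
    · obtain ⟨f, hf⟩ := hF2 i hi (a' i) (ha'o i) (ha'c i hi)
      exact ⟨f, fun _ => hf⟩
    · exact ⟨0, fun h => (hi h).elim⟩
  choose f hf using hf
  by_cases hcase : ∃ α < (Order.succ μ).ord, ∀ b : Ordinal.{0} → Ordinal.{0},
      (∀ j < κ.ord, b j < κ.ord) → ∃ i ∈ {i | i < κ.ord ∧ f i ≤ g α i}, 0 < i ∧ i ∈ Clos κ b
  · obtain ⟨α, hα, hpos⟩ := hcase
    obtain ⟨y, hy, hunb⟩ := exists_unbounded_mem hκ hocont hXcov hpos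
      (v := fun i => E i (g α i) (f i)) (fun i hi => hEo i _ (hg0 α hα i) _ hi.2)
    refine ⟨{Y α y}, ?_, ?_, ?_⟩
    · rw [singleton_subset_iff]
      exact ⟨(α, y), ⟨hα, hy⟩, rfl⟩
    · rw [mk_singleton]
      exact one_lt_aleph0.trans_le hκ0
    · intro x hx
      obtain ⟨k, hk, hkx⟩ := ha'ev x hx
      obtain ⟨i, hi, hki, hiW, hiy⟩ := hunb k hk
      refine ⟨_, rfl, ?_⟩
      simp only [Y, mem_iUnion]
      exact ⟨i, hi, f i, ⟨hiW.2, hiy⟩, (hf i hi).2 (hkx i hi hki)⟩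
  exfalso
  have hyα : ∀ α : Iio (Order.succ μ).ord, ∃ y : X, ∀ k < κ.ord, ∃ i < κ.ord, k < i ∧
      g α.1 i ∈ B i (f i) y.1 := by
    rintro ⟨α, hα⟩
    have hb : ∃ b : Ordinal.{0} → Ordinal.{0}, (∀ j < κ.ord, b j < κ.ord) ∧
        ∀ i ∈ Clos κ b, 0 < i → g α i < f i := by
      by_contra hcon
      refine hcase ⟨α, hα, fun b hb => ?_⟩
      by_contra hcon'
      refine hcon ⟨b, hb, fun i hi hi0 => ?_⟩
      by_contra hle
      exact hcon' ⟨i, ⟨hi.1, not_lt.1 hle⟩, hi0, hi⟩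
    obtain ⟨b, hb, hbg⟩ := hb
    obtain ⟨y, hy, hunb⟩ := exists_unbounded_mem hκ hocont hXcov (W := {i | i ∈ Clos κ b ∧ 0 < i})
      (fun b' hb' => by
        obtain ⟨η, h1, h2, h3⟩ := exists_closure hκ hunc (fun j => max (b j) (b' j))
          (fun j hj => max_lt (hb j hj) (hb' j hj)) (ord_pos_of_isRegular hκ)
        exact ⟨η, ⟨⟨h1, fun j hj => (le_max_left _ _).trans_lt (h3 j hj)⟩, h2⟩, h2, h1,
          fun j hj => (le_max_right _ _).trans_lt (h3 j hj)⟩)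
      (v := fun i => E i (f i) (g α i))
      (fun i hi => hEo i _ (hf i hi.1.1).1 _ (hbg i hi.1 hi.2).le)
    refine ⟨⟨y, hy⟩, fun k hk => ?_⟩
    obtain ⟨i, hi, hki, hiW, hiy⟩ := hunb k hk
    exact ⟨i, hi, hki, (hbg i hiW.1 hiW.2).le, hiy⟩
  choose y hy using hyα
  have hpig : ∃ y₀ : X, ∀ β < (Order.succ μ).ord, ∃ α : Iio (Order.succ μ).ord,
      y α = y₀ ∧ β ≤ α.1 := by
    by_contra hcon
    push Not at hcon
    choose k hk1 hk2 using hcon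
    obtain ⟨k₀, hk₀, hk₀'⟩ := exists_strict_bound hMr k hk1
      (hXcard.trans_lt (Cardinal.lift_lt.2 (Order.lt_succ μ)))
    exact absurd (hk2 (y ⟨k₀, hk₀⟩) ⟨k₀, hk₀⟩ rfl) (not_lt.2 (hk₀' _).le)
  obtain ⟨y₀, hy₀⟩ := hpig
  obtain ⟨C, x, z, hC, hxT, hz, hinc⟩ := exists_good_subset hκ hν hMr
    (hνμ.trans (Order.lt_succ μ)) hg1 hg2
    (T := {α | ∃ h : α < (Order.succ μ).ord, y ⟨α, h⟩ = y₀}) (fun α hα => hα.1)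
    (fun β hβ => by
      obtain ⟨α, h1, h2⟩ := hy₀ β hβ
      exact ⟨α.1, ⟨α.2, h1⟩, h2⟩)
  have hι : ∀ η : C, ∃ i : Iio κ.ord, z η.1 ≤ i.1 ∧ g (x η.1) i.1 ∈ B i.1 (f i.1) y₀.1 := by
    rintro ⟨η, hη⟩
    obtain ⟨h1, h2⟩ := hxT η hη
    obtain ⟨i, hi, hzi, hgi⟩ := hy ⟨x η, h1⟩ (z η) (hz η hη)
    rw [h2] at hgi
    exact ⟨⟨i, hi⟩, hzi.le, hgi⟩
  choose ι hι1 hι2 using hι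
  have hfib : ∀ i : Iio κ.ord, #{η : C | ι η = i} ≤ lift.{1} κ := by
    rintro i
    refine le_trans ?_ (hB i.1 (f i.1) (hf i.1 i.2).1 y₀.1 y₀.2)
    refine mk_le_of_injective
      (f := fun η : {η : C | ι η = i} => (⟨g (x η.1.1) i.1, ?_⟩ : B i.1 (f i.1) y₀.1)) ?_
    · have := hι2 η.1
      rwa [show ι η.1 = i from η.2] at this
    · have hz' : ∀ η : {η : C | ι η = i}, z η.1.1 ≤ i.1 := fun η => by
        have := hι1 η.1
        rwa [show ι η.1 = i from η.2] at this
      have key : ∀ η η' : {η : C | ι η = i}, η.1.1 < η'.1.1 → g (x η.1.1) i.1 ≠ g (x η'.1.1) i.1 :=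
        fun η η' hlt => (hinc _ η.1.2 _ η'.1.2 hlt i.1 i.2 (hz' η) (hz' η')).ne
      intro η η' heq
      have heq' : g (x η.1.1) i.1 = g (x η'.1.1) i.1 := congrArg Subtype.val heq
      rcases lt_trichotomy η.1.1 η'.1.1 with h | h | h
      · exact (key _ _ h heq').elim
      · exact Subtype.ext (Subtype.ext h)
      · exact (key _ _ h heq'.symm).elim
  have hCle : #C ≤ lift.{1} κ := by
    rw [← mk_univ]
    refine le_trans (mk_le_mk_of_subset (t := ⋃ i, {η : C | ι η = i}) fun η _ => ?_)
      (mk_iUnion_le_of _ hκ0 (mk_Iio_ord κ).le hfib)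
    exact mem_iUnion.2 ⟨ι η, rfl⟩
  exact absurd (Cardinal.lift_le.1 (hC.trans hCle)) (not_le.2 (Order.lt_succ κ))

/-! ### The induction -/

/-- The case of the induction in which the cofinality of `μ` differs from `κ`. -/
theorem CovLe.of_cof_ne {κ μ : Cardinal.{0}} (hκ : κ.IsRegular) (hκμ : κ < μ)
    (hcf : μ.ord.cof ≠ κ) (hcov : ∀ δ < μ.ord, CovLe κ δ μ) : CovLe κ μ.ord μ := by
  classical
  have hμ : ℵ₀ ≤ μ := hκ.aleph0_le.trans hκμ.le
  have hX' : ∀ δ, ∃ X : Set (Set Ordinal.{0}), δ < μ.ord → #X ≤ lift.{1} μ ∧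
      (∀ y ∈ X, #y ≤ lift.{1} κ) ∧ ∀ a : Set Ordinal.{0}, a ⊆ Iio δ → #a ≤ lift.{1} κ →
      ∃ Q, Q ⊆ X ∧ #Q < lift.{1} κ ∧ a ⊆ ⋃₀ Q := by
    intro δ
    by_cases hδ : δ < μ.ord
    · obtain ⟨X, hX⟩ := hcov δ hδ
      exact ⟨X, fun _ => hX⟩
    · exact ⟨∅, fun h => (hδ h).elim⟩
  choose X hX using hX'
  refine ⟨⋃ δ ∈ Iio μ.ord, X δ, ?_, ?_, ?_⟩
  · exact mk_biUnion_le_of _ _ (by simpa using hμ) (mk_Iio_ord μ).le fun δ hδ => (hX δ hδ).1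
  · intro y hy
    simp only [mem_iUnion] at hy
    obtain ⟨δ, hδ, hy⟩ := hy
    exact (hX δ hδ).2.1 y hy
  intro a ha hac
  rcases lt_or_gt_of_ne hcf with hlt | hgt
  · -- `a` is a union of fewer than `κ` bounded pieces
    obtain ⟨e, he1, he2⟩ := exists_cofinal_map μ.ord
    have hs : ∀ i < μ.ord.cof.ord, Order.succ (e i) < μ.ord := fun i hi =>
      succ_lt_ord hμ (he1 i hi)
    have hQ : ∀ i : Iio μ.ord.cof.ord, ∃ Q, Q ⊆ X (Order.succ (e i.1)) ∧ #Q < lift.{1} κ ∧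
        a ∩ Iio (Order.succ (e i.1)) ⊆ ⋃₀ Q := fun i =>
      (hX _ (hs i.1 i.2)).2.2 _ inter_subset_right
        ((mk_le_mk_of_subset inter_subset_left).trans hac)
    choose Q hQ1 hQ2 hQ3 using hQ
    refine ⟨⋃ i, Q i, ?_, ?_, ?_⟩
    · refine iUnion_subset fun i => (hQ1 i).trans ?_
      exact subset_biUnion_of_mem (u := X) (hs i.1 i.2)
    · refine (card_iUnion_lt_iff_forall_of_isRegular hκ.lift ?_).2 hQ2
      rw [mk_Iio_ord]
      exact Cardinal.lift_lt.2 hlt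
    · intro x hx
      obtain ⟨i, hi, hxi⟩ := he2 x (ha hx)
      obtain ⟨y, hy, hxy⟩ := hQ3 ⟨i, hi⟩ ⟨hx, Order.lt_succ_of_le hxi⟩
      exact ⟨y, mem_iUnion.2 ⟨_, hy⟩, hxy⟩
  · -- `a` is bounded in `μ`
    obtain ⟨β, hβ, hβ'⟩ := exists_bound (fun x : a => x.1) (fun x => ha x.2)
      (hac.trans_lt (Cardinal.lift_lt.2 hgt))
    have hs := succ_lt_ord hμ hβ
    obtain ⟨Q, h1, h2, h3⟩ := (hX _ hs).2.2 a
      (fun x hx => Order.lt_succ_of_le (hβ' ⟨x, hx⟩)) hac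
    exact ⟨Q, h1.trans (subset_biUnion_of_mem (u := X) hs), h2, h3⟩

/-- A singular `μ` is not the successor of an infinite cardinal. -/
theorem succ_lt_of_cof_eq {κ μ c : Cardinal.{0}} (hκμ : κ < μ) (hcf : μ.ord.cof = κ)
    (hc : ℵ₀ ≤ c) (hcμ : c < μ) : Order.succ c < μ := by
  refine lt_of_le_of_ne (Order.succ_le_of_lt hcμ) ?_
  rintro rfl
  rw [(isRegular_succ hc).cof_ord] at hcf
  exact hκμ.ne hcf.symm

/-- For `κ ≤ μ ≤ λ`, the covering number of `μ` is at most `μ⁺`, and at most `μ` when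
`cf(μ) ≠ κ`. The weaker bound `μ⁺` suffices for going on with the induction, as the covering
number of an ordinal `δ` with `|δ| < μ` is then at most `|δ|⁺ ≤ μ`. -/
theorem covLe_induction {κ lam : Cardinal.{0}} (hκ : κ.IsRegular) (hunc : ℵ₀ < κ)
    (hmi : MildlyIneffable κ lam) (μ : Cardinal.{0}) : κ ≤ μ → μ ≤ lam →
      (μ.ord.cof ≠ κ → CovLe κ μ.ord μ) ∧ CovLe κ μ.ord (Order.succ μ) := by
  induction μ using Cardinal.lt_wf.induction with
  | _ μ ih =>
  intro hκμ hμl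
  rcases hκμ.eq_or_lt with rfl | hκμ
  · refine ⟨fun h => (h hκ.cof_ord).elim, {Iio κ.ord}, ?_, ?_, ?_⟩
    · rw [mk_singleton, ← Cardinal.lift_one.{0, 1}, Cardinal.lift_le]
      exact (one_lt_aleph0.trans (hunc.trans (Order.lt_succ κ))).le
    · rintro _ rfl
      exact (mk_Iio_ord κ).le
    · intro a ha _
      refine ⟨_, Subset.rfl, ?_, by simpa using ha⟩
      rw [mk_singleton, ← Cardinal.lift_one.{0, 1}, Cardinal.lift_lt]
      exact one_lt_aleph0.trans hunc
  have hcov : ∀ δ < μ.ord, CovLe κ δ μ := by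
    intro δ hδ
    have hlt : max δ.card κ < μ := max_lt (Cardinal.lt_ord.1 hδ) hκμ
    have h := (ih _ hlt (le_max_right _ _) (hlt.le.trans hμl)).2
    refine (h.transfer ?_).mono (Order.succ_le_of_lt hlt)
    rw [card_ord]
    exact le_max_left _ _
  by_cases hcf : μ.ord.cof = κ
  · refine ⟨fun h => (h hcf).elim, ?_⟩
    have h1 := succ_lt_of_cof_eq hκμ hcf hκ.aleph0_le hκμ
    have h2 := succ_lt_of_cof_eq hκμ hcf (hκ.aleph0_le.trans (Order.le_succ κ)) h1
    have h3 := succ_lt_of_cof_eq hκμ hcf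
      ((hκ.aleph0_le.trans (Order.le_succ κ)).trans (Order.le_succ _)) h2
    exact CovLe.of_cof_eq hκ hunc hcf rfl h3 hcov fun θ hθ hκθ hθμ =>
      exists_cofinal_family hκ hunc hθ hκθ (hmi.mono (hθμ.trans hμl))
  · have h := CovLe.of_cof_ne hκ hκμ hcf hcov
    exact ⟨fun _ => h, h.mono (Order.le_succ μ)⟩

/-- if `κ` is mildly `λ`-ineffable and `cf(λ) ≠ κ`, then
`cov (λ, κ⁺, κ⁺, κ) = λ`. -/
theorem stmt17 (κ lam : Cardinal.{0}) (hreg : κ.IsRegular) (hunc : ℵ₀ < κ)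
    (hkl : κ ≤ lam) (hmi : MildlyIneffable κ lam) (hcf : lam.ord.cof ≠ κ) :
    covNum lam (Order.succ κ) (Order.succ κ) κ = Cardinal.lift.{1} lam := by
  have hlt : κ < lam := by
    refine lt_of_le_of_ne hkl ?_
    rintro rfl
    exact hcf hreg.cof_ord
  have hsucc : ∀ c : Cardinal.{1}, c < lift.{1} (Order.succ κ) ↔ c ≤ lift.{1} κ := fun c => by
    rw [Cardinal.lift_succ, Order.lt_succ_iff]
  obtain ⟨X, hX1, hX2, hX3⟩ := (covLe_induction hreg hunc hmi lam hkl le_rfl).1 hcf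
  -- the members of the covering family are cut down to subsets of `λ`
  have hmem : #((fun y => y ∩ Iio lam.ord) '' X) ∈ {c : Cardinal.{1} |
      ∃ X : Set (Set Ordinal.{0}), c = #X ∧
      (∀ y ∈ X, y ⊆ Set.Iio lam.ord ∧ #y < Cardinal.lift.{1} (Order.succ κ)) ∧
      ∀ a : Set Ordinal.{0}, a ⊆ Set.Iio lam.ord → #a < Cardinal.lift.{1} (Order.succ κ) →
        ∃ Q, Q ⊆ X ∧ #Q < Cardinal.lift.{1} κ ∧ a ⊆ ⋃₀ Q} := by
    refine ⟨_, rfl, ?_, ?_⟩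
    · rintro _ ⟨y, hy, rfl⟩
      exact ⟨inter_subset_right,
        (hsucc _).2 ((mk_le_mk_of_subset inter_subset_left).trans (hX2 y hy))⟩
    · intro a ha hac
      obtain ⟨Q, h1, h2, h3⟩ := hX3 a ha ((hsucc _).1 hac)
      refine ⟨_, image_mono h1, lt_of_le_of_lt mk_image_le h2, fun x hx => ?_⟩
      obtain ⟨y, hy, hxy⟩ := h3 hx
      exact ⟨_, ⟨y, hy, rfl⟩, hxy, ha hx⟩
  refine le_antisymm ((csInf_le' hmem).trans (mk_image_le.trans hX1)) (le_csInf ⟨_, hmem⟩ ?_)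
  -- a covering family has union `λ`, which fewer than `λ` sets of size `κ < λ` cannot have
  rintro _ ⟨Z, rfl, hZ1, hZ2⟩
  by_contra hcon
  have hbig : Iio lam.ord ⊆ ⋃ y ∈ Z, y := by
    intro x hx
    obtain ⟨Q, h1, -, h3⟩ := hZ2 {x} (by simpa using hx) (by
      rw [mk_singleton, hsucc, ← Cardinal.lift_one.{0, 1}, Cardinal.lift_le]
      exact (one_lt_aleph0.trans hunc).le)
    obtain ⟨y, hy, hxy⟩ := h3 rfl
    exact mem_biUnion (h1 hy) hxy
  have hle := (mk_le_mk_of_subset hbig).trans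
    (mk_biUnion_le_of Z id (c := max #Z (lift.{1} κ))
      ((by simpa using hreg.aleph0_le : ℵ₀ ≤ lift.{1} κ).trans (le_max_right _ _))
      (le_max_left _ _) fun y hy => ((hsucc _).1 (hZ1 y hy).2).trans (le_max_right _ _))
  rw [mk_Iio_ord] at hle
  exact absurd hle (not_le.2 (max_lt (not_le.1 hcon) (Cardinal.lift_lt.2 hlt)))
end
end

section
/- Let κ be a regular uncountable cardinal, λ ≥ κ, and J a κ-complete fine ideal on P_κ(λ). The following are equivalent: (i) J is (λ^{<κ}, 2)-distributive; (ii) given A ∈ J^+ and F : A × A → λ^{<κ} with |{F(a,b) : b ∈ A}| < κ for all a ∈ A, there are B ∈ J^+ with B ⊆ A and h : B → λ^{<κ} such that {b ∈ B : F(a,b) ≠ h(a)} ∈ J for all a ∈ B; (iii) J^+ →_J (J^+)^n_ρ holds whenever 2 ≤ n < ω and 0 < ρ < κ; (iv) J^+ →_J (J^+)³₂ holds. -/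
/-!
Since `|P_κ(λ)| = λ^{<κ}`, distributivity (i) says that below every positive set there is a positive
`B` deciding, modulo `J`, each of `|P_κ(λ)|` many given sets (`Decides`).

(i) ⇒ (ii): let `B` decide all the sets `{c : F(a,c) = F(a,b)}`. For fixed `a` there are fewer
than `κ` of them, so by `κ`-completeness `B` is almost contained in one.

The converse directions need `κ` to be a strong limit (`two_power_lt`). Both (ii) and (iv) imply
that every binary relation is homogeneous on a positive set modulo `J`. If `κ ≤ 2^μ` with `μ < κ`,
then `a ↦` (code in `2^μ` of an ordinal below `κ` missing from `a`) has all its fibres in `J` by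
fineness; but on a set homogeneous for the lexicographic order of the codes, every digit, and hence
by completeness the whole code, is constant modulo `J`, a contradiction.

(ii) ⇒ (i) and (iv) ⇒ (i): given sets `P d` for `d ∈ P_κ(λ)`, consider the trace
`{d ⊆ a : b ∈ P d}`, which takes fewer than `κ` values for fixed `a` as `κ` is a strong limit. It
suffices that for all `a ∈ B` it be constant modulo `J` on `B`, since `B` is cofinal
(`decides_of_trace`). For (ii) take `F(a,b)` to be a code of the trace. For (iv) colour `(a,b,c)` by
whether `b` and `c` have the same trace on `a`; the colour "different" is impossible, as some trace
occurs positively often.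

(i) ⇒ (iii) goes by induction on the length of the tuples (`arrow_succ`): stabilise the last
coordinate, and use that `κ` is a strong limit to absorb into `Z a` the exceptional sets of all
tuples of subsets of `a`.
-/

set_option autoImplicit false

noncomputable section

open Cardinal Set

universe u

/-! ### The cardinality of `P_κ(λ)` -/

theorem kappa_le_powerlt {κ lam : Cardinal.{0}} (hreg : κ.IsRegular) (hkl : κ ≤ lam) :
    κ ≤ Cardinal.powerlt lam κ := by
  have h1 : (1 : Cardinal.{0}) < κ := by exact_mod_cast hreg.nat_lt 1
  exact hkl.trans (by simpa using le_powerlt lam h1)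

theorem mk_Iio_ord_lift (c : Cardinal.{0}) : #(Set.Iio c.ord) = Cardinal.lift.{1} c := by
  rw [Cardinal.mk_Iio_ordinal, card_ord]

theorem mk_Pkl_le {κ lam : Cardinal.{0}} (hreg : κ.IsRegular) (hkl : κ ≤ lam) :
    #(Pkl κ lam) ≤ Cardinal.lift.{1} (Cardinal.powerlt lam κ) := by
  have hinf : ℵ₀ ≤ lam := hreg.aleph0_le.trans hkl
  have hsub : Pkl κ lam ⊆ ⋃ o : Set.Iio κ.ord,
      {t | t ⊆ Set.Iio lam.ord ∧ #t ≤ Cardinal.lift.{1} o.1.card} := by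
    rintro a ⟨ha, hak⟩
    obtain ⟨c, hc⟩ := Cardinal.mem_range_lift_of_le hak.le
    rw [mem_iUnion]
    refine ⟨⟨c.ord, ?_⟩, ha, ?_⟩
    · rw [← hc, Cardinal.lift_lt] at hak
      exact ord_lt_ord.2 hak
    · simp [hc]
  refine (mk_le_mk_of_subset hsub).trans ((mk_iUnion_le _).trans ?_)
  have hle : (⨆ o : Set.Iio κ.ord,
      #{t | t ⊆ Set.Iio lam.ord ∧ #t ≤ Cardinal.lift.{1} o.1.card}) ≤
      Cardinal.lift.{1} (Cardinal.powerlt lam κ) := by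
    refine ciSup_le' fun o => (mk_bounded_subset_le _ _).trans ?_
    rw [mk_Iio_ord_lift, max_eq_left (by simpa using hinf), ← lift_power, Cardinal.lift_le]
    exact le_powerlt _ (lt_ord.1 o.2)
  refine (mul_le_mul' le_rfl hle).trans ?_
  rw [mk_Iio_ord_lift, ← lift_mul, Cardinal.lift_le]
  have hk := kappa_le_powerlt hreg hkl
  exact (mul_le_mul' hk le_rfl).trans (mul_eq_self (hreg.aleph0_le.trans hk)).le

/-- A function from a set of size `c < κ` into `λ` is coded by its graph, a subset of size `c`
of a set of size `λ`. -/
theorem le_mk_Pkl {κ lam : Cardinal.{0}} (hreg : κ.IsRegular) (hkl : κ ≤ lam) :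
    Cardinal.lift.{1} (Cardinal.powerlt lam κ) ≤ #(Pkl κ lam) := by
  have hinf : ℵ₀ ≤ lam := hreg.aleph0_le.trans hkl
  have key : ∀ c < κ, Cardinal.lift.{1} (lam ^ c) ≤ #(Pkl κ lam) := by
    intro c hc
    have hcard : #(Set.Iio c.ord × Set.Iio lam.ord) ≤ #(Set.Iio lam.ord) := by
      rw [mk_prod, mk_Iio_ord_lift, mk_Iio_ord_lift, Cardinal.lift_id, Cardinal.lift_id,
        ← lift_mul, Cardinal.lift_le]
      exact (mul_le_mul' (hc.le.trans hkl) le_rfl).trans (mul_eq_self hinf).le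
    obtain ⟨e⟩ := Cardinal.le_def _ _ |>.1 hcard
    have : Cardinal.lift.{1} (lam ^ c) = #(Set.Iio c.ord → Set.Iio lam.ord) := by
      rw [lift_power, ← mk_Iio_ord_lift, ← mk_Iio_ord_lift, power_def]
    rw [this]
    refine mk_le_of_injective
      (f := fun f => (⟨range fun x => (e (x, f x)).1, ?_, ?_⟩ : Pkl κ lam)) ?_
    · rintro _ ⟨x, rfl⟩
      exact (e (x, f x)).2
    · refine mk_range_le.trans_lt ?_
      rwa [mk_Iio_ord_lift, Cardinal.lift_lt]
    · intro f g hfg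
      have hr : (range fun x => (e (x, f x)).1) = range fun x => (e (x, g x)).1 :=
        congrArg Subtype.val hfg
      funext x
      have hx : (e (x, f x)).1 ∈ range fun x => (e (x, g x)).1 := hr ▸ ⟨x, rfl⟩
      obtain ⟨y, hy⟩ := hx
      have := e.injective (Subtype.ext hy)
      simp only [Prod.mk.injEq] at this
      obtain ⟨rfl, h⟩ := this
      exact h.symm
  by_contra! hlt
  obtain ⟨d, hd⟩ := Cardinal.mem_range_lift_of_le hlt.le
  rw [← hd, Cardinal.lift_lt] at hlt
  refine hlt.not_ge (powerlt_le.2 fun c hc => ?_)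
  have := key c hc
  rwa [← hd, Cardinal.lift_le] at this

theorem mk_Pkl {κ lam : Cardinal.{0}} (hreg : κ.IsRegular) (hkl : κ ≤ lam) :
    #(Pkl κ lam) = Cardinal.lift.{1} (Cardinal.powerlt lam κ) :=
  (mk_Pkl_le hreg hkl).antisymm (le_mk_Pkl hreg hkl)

/-! ### Ideal calculus -/

theorem iUnion_mem_ideal {κ : Cardinal.{0}} {J : Set (Set (Set Ordinal.{0}))}
    (hcomp : KappaComplete κ J) {ι : Type 1} (hι : #ι < Cardinal.lift.{1} κ)
    (f : ι → Set (Set Ordinal.{0})) (hf : ∀ i, f i ∈ J) : (⋃ i, f i) ∈ J := by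
  rw [← sUnion_range]
  refine hcomp _ ?_ (mk_range_le.trans_lt hι)
  rintro _ ⟨i, rfl⟩
  exact hf i

theorem exists_fiber_pos {κ lam : Cardinal.{0}} {J : Set (Set (Set Ordinal.{0}))}
    (hcomp : KappaComplete κ J)
    {ι : Type 1} (hι : #ι < Cardinal.lift.{1} κ) {A : Set (Set Ordinal.{0})}
    (hA : A ∈ plusOf J (Pkl κ lam)) (f : Set Ordinal.{0} → ι) :
    ∃ i, {a | a ∈ A ∧ f a = i} ∈ plusOf J (Pkl κ lam) := by
  by_contra! hno
  refine hA.2 ?_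
  have h := iUnion_mem_ideal hcomp hι (fun i => {a | a ∈ A ∧ f a = i}) fun i => by
    by_contra hi
    exact hno i ⟨fun a ha => hA.1 ha.1, hi⟩
  convert h
  ext a
  simp

theorem not_superset_mem {κ lam : Cardinal.{0}} {J : Set (Set (Set Ordinal.{0}))}
    (hfine : Ikl κ lam ⊆ J) {d : Set Ordinal.{0}} (hd : d ∈ Pkl κ lam) :
    {b | b ∈ Pkl κ lam ∧ ¬ d ⊆ b} ∈ J :=
  hfine ⟨fun _ hb => hb.1, d, hd, fun _ hb => hb.2⟩

/-- Positive sets are cofinal, by fineness. -/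
theorem exists_superset {κ lam : Cardinal.{0}} {J : Set (Set (Set Ordinal.{0}))}
    (hJ : IsIdealOn J (Pkl κ lam)) (hfine : Ikl κ lam ⊆ J) {B : Set (Set Ordinal.{0})}
    (hB : B ∈ plusOf J (Pkl κ lam)) {d : Set Ordinal.{0}} (hd : d ∈ Pkl κ lam) :
    ∃ a ∈ B, d ⊆ a := by
  by_contra! h
  exact hB.2 (hJ.mem_of_subset _ (not_superset_mem hfine hd) _ fun b hb => ⟨hB.1 hb, h b hb⟩)

theorem exists_diff {κ lam : Cardinal.{0}} {J : Set (Set (Set Ordinal.{0}))}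
    (hJ : IsIdealOn J (Pkl κ lam)) {B W : Set (Set Ordinal.{0})}
    (hB : B ∈ plusOf J (Pkl κ lam)) (hW : W ∈ J) : ∃ b ∈ B, b ∉ W := by
  by_contra! h
  exact hB.2 (hJ.mem_of_subset _ hW _ h)

/-! ### Deciding families of sets -/

/-- Below every positive set there is a positive set which decides, modulo `J`, every member of
a given family of sets indexed by `P_κ(λ)`. As `P_κ(λ)` has size `λ^{<κ}`, this is a restatement of
`(λ^{<κ}, 2)`-distributivity. -/
def Decides (κ lam : Cardinal.{0}) (J : Set (Set (Set Ordinal.{0}))) : Prop :=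
  ∀ A ∈ plusOf J (Pkl κ lam), ∀ P : Set Ordinal.{0} → Set (Set Ordinal.{0}),
    ∃ B ∈ plusOf J (Pkl κ lam), B ⊆ A ∧ ∀ d ∈ Pkl κ lam, B \ P d ∈ J ∨ B ∩ P d ∈ J

theorem Decides.family {κ lam : Cardinal.{0}} {J : Set (Set (Set Ordinal.{0}))}
    (h : Decides κ lam J) {T : Type 1} (hT : #T ≤ #(Pkl κ lam)) {A : Set (Set Ordinal.{0})}
    (hA : A ∈ plusOf J (Pkl κ lam)) (P : T → Set (Set Ordinal.{0})) :
    ∃ B ∈ plusOf J (Pkl κ lam), B ⊆ A ∧ ∀ t, B \ P t ∈ J ∨ B ∩ P t ∈ J := by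
  obtain ⟨e⟩ := Cardinal.le_def _ _ |>.1 hT
  obtain ⟨B, hB, hBA, hd⟩ := h A hA fun d => {b | ∃ t, (e t).1 = d ∧ b ∈ P t}
  refine ⟨B, hB, hBA, fun t => ?_⟩
  have heq : {b | ∃ t', (e t').1 = (e t).1 ∧ b ∈ P t'} = P t := by
    ext b
    constructor
    · rintro ⟨t', ht', hb⟩
      rwa [← e.injective (Subtype.ext ht')]
    · exact fun hb => ⟨t, rfl, hb⟩
  have := hd _ (e t).2
  rwa [heq] at this

/-- If fewer than `κ` fibres of `f` cover `B` and `B` decides each of them, then `f` is constant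
on `B` modulo `J`. -/
theorem exists_const_of_decides {κ lam : Cardinal.{0}} {J : Set (Set (Set Ordinal.{0}))}
    (hcomp : KappaComplete κ J) {B : Set (Set Ordinal.{0})} (hB : B ∈ plusOf J (Pkl κ lam))
    (f : Set Ordinal.{0} → Ordinal.{0}) {V : Set Ordinal.{0}} (hV : #V < Cardinal.lift.{1} κ)
    (hf : ∀ b ∈ B, f b ∈ V)
    (hdec : ∀ o ∈ V, B \ {b | f b = o} ∈ J ∨ B ∩ {b | f b = o} ∈ J) :
    ∃ o ∈ V, {b | b ∈ B ∧ f b ≠ o} ∈ J := by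
  by_contra! hno
  refine hB.2 ?_
  have h := iUnion_mem_ideal hcomp hV (fun o => B ∩ {b | f b = o}) fun o =>
    (hdec o o.2).resolve_left (hno o o.2)
  convert h
  ext b
  simp only [mem_iUnion, mem_inter_iff, mem_ofPred_eq, Subtype.exists]
  exact ⟨fun hb => ⟨f b, hf b hb, hb, rfl⟩, fun ⟨_, _, hb, _⟩ => hb⟩

/-- The two-piece family generated by `P`, reduced to the trivial one when `P` or its complement
is in `J`. -/
theorem exists_MAD_of_set {κ lam : Cardinal.{0}} {J : Set (Set (Set Ordinal.{0}))}
    (hJ : IsIdealOn J (Pkl κ lam)) (P : Set (Set Ordinal.{0})) :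
    ∃ Q, MADOn J (Pkl κ lam) Q ∧ #Q ≤ Cardinal.lift.{1} (2 : Cardinal.{0}) ∧
      ∀ C ∈ Q, ∀ B ⊆ Pkl κ lam, B \ C ∈ J → B \ P ∈ J ∨ B ∩ P ∈ J := by
  set X := Pkl κ lam
  by_cases hpos : X ∩ P ∉ J ∧ X \ P ∉ J
  · refine ⟨{X ∩ P, X \ P}, ⟨?_, ?_, ?_⟩, ?_, ?_⟩
    · rintro C (rfl | rfl)
      · exact ⟨inter_subset_left, hpos.1⟩
      · exact ⟨sdiff_subset, hpos.2⟩
    · have h1 : (X ∩ P) ∩ (X \ P) = ∅ := by ext; simp; tauto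
      have h2 : (X \ P) ∩ (X ∩ P) = ∅ := by rw [inter_comm, h1]
      rintro C (rfl | rfl) D (rfl | rfl) hCD
      · exact absurd rfl hCD
      · rw [h1]; exact hJ.empty_mem
      · rw [h2]; exact hJ.empty_mem
      · exact absurd rfl hCD
    · intro C hC
      by_contra! hno
      refine hC.2 (hJ.mem_of_subset _
        (hJ.union_mem _ (hno _ (Or.inl rfl)) _ (hno _ (Or.inr rfl))) _ fun c hc => ?_)
      have := hC.1 hc
      by_cases hcP : c ∈ P
      · exact Or.inl ⟨⟨this, hcP⟩, hc⟩
      · exact Or.inr ⟨⟨this, hcP⟩, hc⟩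
    · have h := mk_insert_le (a := X ∩ P) (s := {X \ P})
      rw [mk_singleton] at h
      refine h.trans ?_
      norm_num
    · rintro C (rfl | rfl) B hB hBC
      · exact Or.inl (hJ.mem_of_subset _ hBC _ fun b hb => ⟨hb.1, fun h => hb.2 h.2⟩)
      · exact Or.inr (hJ.mem_of_subset _ hBC _ fun b hb => ⟨hb.1, fun h => h.2 hb.2⟩)
  · refine ⟨{X}, ⟨?_, ?_, ?_⟩, ?_, ?_⟩
    · rintro C rfl
      exact ⟨Subset.rfl, hJ.ground_not_mem⟩
    · rintro C rfl D rfl hCD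
      exact absurd rfl hCD
    · intro C hC
      refine ⟨X, rfl, ?_⟩
      rw [inter_eq_right.2 hC.1]
      exact hC.2
    · rw [mk_singleton]
      norm_num
    · rintro C rfl B hB -
      by_cases h : X ∩ P ∈ J
      · exact Or.inr (hJ.mem_of_subset _ h _ fun b hb => ⟨hB hb.1, hb.2⟩)
      · have h' : X \ P ∈ J := by tauto
        exact Or.inl (hJ.mem_of_subset _ h' _ fun b hb => ⟨hB hb.1, hb.2⟩)

theorem decides_of_distr {κ lam : Cardinal.{0}} {J : Set (Set (Set Ordinal.{0}))}
    (hreg : κ.IsRegular) (hkl : κ ≤ lam) (hJ : IsIdealOn J (Pkl κ lam))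
    (h : DistrPkl κ lam J (Cardinal.powerlt lam κ) 2) : Decides κ lam J := by
  intro A hA P
  have hcard : #(Pkl κ lam) ≤ #(Set.Iio (Cardinal.powerlt lam κ).ord) := by
    rw [mk_Iio_ord_lift]
    exact mk_Pkl_le hreg hkl
  obtain ⟨e⟩ := Cardinal.le_def _ _ |>.1 hcard
  choose Q hQ using fun i : Ordinal.{0} =>
    exists_MAD_of_set hJ {b | ∃ d : Pkl κ lam, (e d).1 = i ∧ b ∈ P d}
  obtain ⟨B, hB, hBA, g, hg, hBg⟩ := h A hA Q fun i _ => ⟨(hQ i).1, (hQ i).2.1⟩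
  refine ⟨B, hB, hBA, fun d hd => ?_⟩
  have hi := (e ⟨d, hd⟩).2
  have := (hQ _).2.2 _ (hg _ hi) B hB.1 (hBg _ hi)
  have heq : {b | ∃ d' : Pkl κ lam, (e d').1 = (e ⟨d, hd⟩).1 ∧ b ∈ P d'} = P d := by
    ext b
    constructor
    · rintro ⟨d', hd', hb⟩
      have := e.injective (Subtype.ext hd')
      subst this
      exact hb
    · exact fun hb => ⟨⟨d, hd⟩, rfl, hb⟩
  rwa [heq] at this

theorem distr_of_decides {κ lam : Cardinal.{0}} {J : Set (Set (Set Ordinal.{0}))}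
    (hreg : κ.IsRegular) (hkl : κ ≤ lam) (hJ : IsIdealOn J (Pkl κ lam))
    (h : Decides κ lam J) : DistrPkl κ lam J (Cardinal.powerlt lam κ) 2 := by
  intro A hA Q hQ
  have hne : ∀ i : Set.Iio (Cardinal.powerlt lam κ).ord, ∃ P, P ∈ Q i := fun i => by
    obtain ⟨P, hP, -⟩ := (hQ i i.2).1.2.2 A hA
    exact ⟨P, hP⟩
  choose P hP using hne
  obtain ⟨B, hB, hBA, hdec⟩ := h.family
    (by rw [mk_Iio_ord_lift]; exact le_mk_Pkl hreg hkl) hA P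
  have key : ∀ i, i < (Cardinal.powerlt lam κ).ord → ∃ C ∈ Q i, B \ C ∈ J := by
    intro i hi
    rcases hdec ⟨i, hi⟩ with h1 | h1
    · exact ⟨_, hP ⟨i, hi⟩, h1⟩
    obtain ⟨⟨-, -, hmax⟩, hcard⟩ := hQ i hi
    obtain ⟨C, hC, hCB⟩ := hmax B hB
    refine ⟨C, hC, ?_⟩
    by_contra hno
    -- a third member of `Q i` meets `B \ C` in a positive set
    obtain ⟨D, hD, hDB⟩ := hmax (B \ C) ⟨sdiff_subset.trans hB.1, hno⟩
    have hPC : P ⟨i, hi⟩ ≠ C := by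
      rintro rfl
      exact hCB (by rwa [inter_comm])
    have hPD : P ⟨i, hi⟩ ≠ D := by
      rintro rfl
      exact hDB (hJ.mem_of_subset _ h1 _ fun b hb => ⟨hb.2.1, hb.1⟩)
    have hCD : C ≠ D := by
      rintro rfl
      exact hDB (hJ.mem_of_subset _ hJ.empty_mem _ fun b hb => hb.2.2 hb.1)
    have h3 : #(ULift.{1} (Fin 3)) ≤ #(Q i) := mk_le_of_injective
      (f := fun k => ![⟨P ⟨i, hi⟩, hP ⟨i, hi⟩⟩, ⟨C, hC⟩, ⟨D, hD⟩] k.down) (by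
        rintro ⟨k⟩ ⟨l⟩ hkl
        fin_cases k <;> fin_cases l <;> simp_all [eq_comm])
    have h3' : (3 : Cardinal.{1}) ≤ 2 := by
      have := h3.trans hcard
      simpa using this
    exact absurd h3' (by norm_num)
  choose! g hg using key
  exact ⟨B, hB, hBA, g, fun i hi => (hg i hi).1, fun i hi => (hg i hi).2⟩

/-! ### Two-dimensional homogeneity makes `κ` a strong limit -/

/-- Every binary relation on `P_κ(λ)` is homogeneous, modulo `J`, on some positive set. -/
def PairHomog (κ lam : Cardinal.{0}) (J : Set (Set (Set Ordinal.{0}))) : Prop :=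
  ∀ R : Set Ordinal.{0} → Set Ordinal.{0} → Prop, ∃ B ∈ plusOf J (Pkl κ lam),
    (∀ a ∈ B, {b | b ∈ B ∧ ¬ R a b} ∈ J) ∨ ∀ a ∈ B, {b | b ∈ B ∧ R a b} ∈ J

/-- If `κ ≤ 2 ^ #ι`, then `P_κ(λ)` is mapped to the subsets of `ι` with all fibres in `J`: send
`a` to the code of some ordinal below `κ` which is missing from `a`. -/
theorem exists_small_fibers {κ lam : Cardinal.{0}} {J : Set (Set (Set Ordinal.{0}))}
    (hreg : κ.IsRegular) (hkl : κ ≤ lam)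
    (hJ : IsIdealOn J (Pkl κ lam)) (hfine : Ikl κ lam ⊆ J) {ι : Type 1}
    (hι : Cardinal.lift.{1} κ ≤ #(Set ι)) :
    ∃ x : Set Ordinal.{0} → Set ι, ∀ y, {a | a ∈ Pkl κ lam ∧ x a = y} ∈ J := by
  rw [← mk_Iio_ord_lift] at hι
  obtain ⟨e⟩ := Cardinal.le_def _ _ |>.1 hι
  have hmiss : ∀ a : Set Ordinal.{0}, ∃ ξ : Set.Iio κ.ord, a ∈ Pkl κ lam → ξ.1 ∉ a := by
    intro a
    by_contra! hno
    have hsub : Set.Iio κ.ord ⊆ a := fun ξ hξ => (hno ⟨ξ, hξ⟩).2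
    have ha := (hno ⟨0, hreg.ord_pos⟩).1.2
    have := mk_le_mk_of_subset hsub
    rw [mk_Iio_ord_lift] at this
    exact this.not_gt ha
  choose g hg using hmiss
  refine ⟨fun a => e (g a), fun y => ?_⟩
  by_cases hy : ∃ ξ, e ξ = y
  · obtain ⟨ξ, rfl⟩ := hy
    have hξ : {ξ.1} ∈ Pkl κ lam := by
      refine ⟨?_, ?_⟩
      · rintro _ rfl
        exact lt_of_lt_of_le ξ.2 (ord_le_ord.2 hkl)
      · rw [mk_singleton]
        simpa using hreg.nat_lt 1
    refine hJ.mem_of_subset _ (not_superset_mem hfine hξ) _ ?_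
    rintro a ⟨ha, hae⟩
    refine ⟨ha, fun h => hg a ha ?_⟩
    rw [e.injective hae]
    exact h rfl
  · convert hJ.empty_mem
    ext a
    simp only [mem_ofPred_eq, mem_empty_iff_false, iff_false]
    exact fun h => hy ⟨_, h.2⟩

/-- The relation used is the lexicographic order on the codes of `exists_small_fibers`. On a
homogeneous set each coordinate of the code is constant modulo `J`, by induction on the
coordinate: once the earlier coordinates have stabilised, a single `1` (for an increasing set) or
a single `0` (otherwise) in the current coordinate forces the same digit almost everywhere. -/
theorem two_power_lt {κ lam : Cardinal.{0}} {J : Set (Set (Set Ordinal.{0}))}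
    (hreg : κ.IsRegular) (hkl : κ ≤ lam)
    (hJ : IsIdealOn J (Pkl κ lam)) (hcomp : KappaComplete κ J) (hfine : Ikl κ lam ⊆ J)
    (h : PairHomog κ lam J) (ι : Type 1) (hι : #ι < Cardinal.lift.{1} κ) :
    #(Set ι) < Cardinal.lift.{1} κ := by
  by_contra! hle
  obtain ⟨x, hx⟩ := exists_small_fibers hreg hkl hJ hfine hle
  let r : ι → ι → Prop := WellOrderingRel
  have hwf : WellFounded r := IsWellFounded.wf
  have htri : ∀ i j, r i j ∨ i = j ∨ r j i := trichotomous_of r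
  obtain ⟨B, hB, hhom⟩ := h fun a b =>
    ∃ i, (∀ j, r j i → (j ∈ x a ↔ j ∈ x b)) ∧ i ∉ x a ∧ i ∈ x b
  have key : ∀ i, ∃ p : Prop, {b | b ∈ B ∧ ¬ (i ∈ x b ↔ p)} ∈ J := by
    intro i
    induction i using hwf.induction with
    | _ i ih =>
    choose p hp using ih
    have hW := iUnion_mem_ideal hcomp ((mk_subtype_le fun j => r j i).trans_lt hι)
      (fun j : {j // r j i} => {b | b ∈ B ∧ ¬ (j.1 ∈ x b ↔ p j.1 j.2)}) fun j => hp j.1 j.2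
    set W := ⋃ j : {j // r j i}, {b | b ∈ B ∧ ¬ (j.1 ∈ x b ↔ p j.1 j.2)}
    have hagree : ∀ b ∈ B, b ∉ W → ∀ j (hj : r j i), j ∈ x b ↔ p j hj := by
      intro b hb hbW j hj
      by_contra hno
      exact hbW (mem_iUnion.2 ⟨⟨j, hj⟩, hb, hno⟩)
    rcases hhom with hR | hR
    · by_cases hex : ∃ b ∈ B, b ∉ W ∧ i ∈ x b
      · obtain ⟨b, hb, hbW, hib⟩ := hex
        refine ⟨True, hJ.mem_of_subset _ (hJ.union_mem _ hW _ (hR b hb)) _ ?_⟩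
        rintro c ⟨hc, hic⟩
        by_cases hcW : c ∈ W
        · exact Or.inl hcW
        refine Or.inr ⟨hc, ?_⟩
        rintro ⟨k, hk, hkb, hkc⟩
        rcases htri k i with hki | rfl | hik
        · exact hkb ((hagree b hb hbW k hki).2 ((hagree c hc hcW k hki).1 hkc))
        · exact hkb hib
        · exact hic (iff_true_intro ((hk i hik).1 hib))
      · refine ⟨False, hJ.mem_of_subset _ hW _ ?_⟩
        rintro c ⟨hc, hic⟩
        by_contra hcW
        exact hic (iff_false_intro fun h => hex ⟨c, hc, hcW, h⟩)
    · by_cases hex : ∃ b ∈ B, b ∉ W ∧ i ∉ x b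
      · obtain ⟨b, hb, hbW, hib⟩ := hex
        refine ⟨False, hJ.mem_of_subset _ (hJ.union_mem _ hW _ (hR b hb)) _ ?_⟩
        rintro c ⟨hc, hic⟩
        by_cases hcW : c ∈ W
        · exact Or.inl hcW
        refine Or.inr ⟨hc, i, fun j hj => ?_, hib, ?_⟩
        · rw [hagree b hb hbW j hj, hagree c hc hcW j hj]
        · by_contra h
          exact hic (iff_false_intro h)
      · refine ⟨True, hJ.mem_of_subset _ hW _ ?_⟩
        rintro c ⟨hc, hic⟩
        by_contra hcW
        refine hic (iff_true_intro ?_)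
        by_contra h
        exact hex ⟨c, hc, hcW, h⟩
  choose p hp using key
  refine hB.2 (hJ.mem_of_subset _ (hJ.union_mem _ (hx {i | p i}) _
    (iUnion_mem_ideal hcomp hι _ hp)) _ fun b hb => ?_)
  by_cases hb' : x b = {i | p i}
  · exact Or.inl ⟨hB.1 hb, hb'⟩
  · right
    rw [mem_iUnion]
    by_contra hno
    refine hb' (Set.ext fun i => ?_)
    by_contra hi
    exact hno ⟨i, hb, hi⟩

/-! ### The four properties -/

/-- Clause (ii) of the theorem: functions on pairs with small ranges are, modulo `J`, functions
of the first variable. -/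
def Selects (κ lam : Cardinal.{0}) (J : Set (Set (Set Ordinal.{0}))) : Prop :=
  ∀ A ∈ plusOf J (Pkl κ lam),
    ∀ F : Set Ordinal.{0} → Set Ordinal.{0} → Ordinal.{0},
      (∀ a b, F a b < (Cardinal.powerlt lam κ).ord) →
      (∀ a ∈ A, #{o : Ordinal.{0} | ∃ b ∈ A, F a b = o} < Cardinal.lift.{1} κ) →
      ∃ B ∈ plusOf J (Pkl κ lam), B ⊆ A ∧
        ∃ h : Set Ordinal.{0} → Ordinal.{0},
          (∀ a ∈ B, h a < (Cardinal.powerlt lam κ).ord) ∧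
          ∀ a ∈ B, {b | b ∈ B ∧ F a b ≠ h a} ∈ J

theorem aleph0_le_mk_Pkl {κ lam : Cardinal.{0}} (hreg : κ.IsRegular) (hkl : κ ≤ lam) :
    ℵ₀ ≤ #(Pkl κ lam) := by
  rw [mk_Pkl hreg hkl]
  simpa using hreg.aleph0_le.trans (kappa_le_powerlt hreg hkl)

theorem selects_of_decides {κ lam : Cardinal.{0}} {J : Set (Set (Set Ordinal.{0}))}
    (hreg : κ.IsRegular) (hkl : κ ≤ lam)
    (hcomp : KappaComplete κ J) (h : Decides κ lam J) : Selects κ lam J := by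
  intro A hA F hF hsmall
  obtain ⟨B, hB, hBA, hdec⟩ := h.family (T := Pkl κ lam × Pkl κ lam)
    (by simpa using (mul_eq_self (aleph0_le_mk_Pkl hreg hkl)).le) hA
    fun t => {c | F t.1 c = F t.1 t.2}
  have key : ∀ a ∈ B, ∃ o ∈ {o : Ordinal.{0} | ∃ b ∈ A, F a b = o},
      {b | b ∈ B ∧ F a b ≠ o} ∈ J := by
    intro a ha
    refine exists_const_of_decides hcomp hB (F a) (hsmall a (hBA ha))
      (fun b hb => ⟨b, hBA hb, rfl⟩) ?_
    rintro _ ⟨b, hb, rfl⟩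
    exact hdec (⟨a, hB.1 ha⟩, ⟨b, hA.1 hb⟩)
  choose! g hg using key
  refine ⟨B, hB, hBA, g, fun a ha => ?_, fun a ha => (hg a ha).2⟩
  obtain ⟨b, -, hb⟩ := (hg a ha).1
  rw [← hb]
  exact hF a b

theorem pairHomog_of_selects {κ lam : Cardinal.{0}} {J : Set (Set (Set Ordinal.{0}))}
    (hreg : κ.IsRegular) (hkl : κ ≤ lam) (hJ : IsIdealOn J (Pkl κ lam))
    (hcomp : KappaComplete κ J) (h : Selects κ lam J) : PairHomog κ lam J := by
  classical
  intro R
  have h1θ : (1 : Ordinal.{0}) < (Cardinal.powerlt lam κ).ord := by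
    rw [lt_ord]
    simpa using lt_of_lt_of_le (by exact_mod_cast hreg.nat_lt 1) (kappa_le_powerlt hreg hkl)
  obtain ⟨B, hB, -, g, -, hg⟩ := h (Pkl κ lam) ⟨Subset.rfl, hJ.ground_not_mem⟩
    (fun a b => if R a b then 1 else 0)
    (fun a b => by split_ifs; exacts [h1θ, zero_lt_one.trans h1θ])
    (fun a _ => by
      have hsub : {o : Ordinal.{0} | ∃ b ∈ Pkl κ lam, (if R a b then (1 : Ordinal.{0}) else 0) = o}
          ⊆ ({1, 0} : Set Ordinal.{0}) := by
        rintro _ ⟨b, -, rfl⟩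
        split_ifs <;> simp
      refine lt_of_lt_of_le (lt_of_le_of_lt (mk_le_mk_of_subset hsub) ?_)
        (Cardinal.lift_le.2 hreg.aleph0_le)
      rw [Cardinal.lift_aleph0]
      exact (Set.toFinite _).lt_aleph0)
  obtain ⟨i, hi⟩ := exists_fiber_pos hcomp (ι := ULift.{1} Prop)
    (by
      refine lt_of_lt_of_le (lt_aleph0_of_finite _) ?_
      simpa using hreg.aleph0_le) hB fun a => ⟨g a = 1⟩
  refine ⟨_, hi, ?_⟩
  by_cases hip : i.down
  · refine Or.inl fun a ha => hJ.mem_of_subset _ (hg a ha.1) _ ?_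
    rintro b ⟨hb, hR⟩
    have : g a = 1 := by rw [← ha.2] at hip; exact hip
    refine ⟨hb.1, ?_⟩
    rw [this, if_neg hR]
    exact zero_ne_one
  · refine Or.inr fun a ha => hJ.mem_of_subset _ (hg a ha.1) _ ?_
    rintro b ⟨hb, hR⟩
    have : g a ≠ 1 := by rw [← ha.2] at hip; exact hip
    refine ⟨hb.1, ?_⟩
    rw [if_pos hR]
    exact this.symm

/-- The family of all `d ⊆ a` such that `b ∈ P d`, each `d` being presented as a set of elements
of the subtype `a`. -/
def traceOn (P : Set Ordinal.{0} → Set (Set Ordinal.{0})) (a b : Set Ordinal.{0}) : Set (Set a) :=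
  {d | b ∈ P (Subtype.val '' d)}

/-- If the trace is constant modulo `J` on `B` for every `a ∈ B`, then `B` decides every `P d`. -/
theorem decides_of_trace {κ lam : Cardinal.{0}} {J : Set (Set (Set Ordinal.{0}))}
    (hJ : IsIdealOn J (Pkl κ lam)) (hfine : Ikl κ lam ⊆ J)
    {P : Set Ordinal.{0} → Set (Set Ordinal.{0})} {B : Set (Set Ordinal.{0})}
    (hB : B ∈ plusOf J (Pkl κ lam))
    (h : ∀ a ∈ B, ∃ W ∈ J, ∀ b ∈ B, ∀ c ∈ B, b ∉ W → c ∉ W → traceOn P a b = traceOn P a c) :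
    ∀ d ∈ Pkl κ lam, B \ P d ∈ J ∨ B ∩ P d ∈ J := by
  intro d hd
  obtain ⟨a, ha, hda⟩ := exists_superset hJ hfine hB hd
  obtain ⟨W, hW, hWa⟩ := h a ha
  obtain ⟨b, hb, hbW⟩ := exists_diff hJ hB hW
  have hd' : Subtype.val '' (Subtype.val ⁻¹' d : Set a) = d := by
    rw [Subtype.image_preimage_coe, inter_eq_right.2 hda]
  have hiff : ∀ c ∈ B, c ∉ W → (b ∈ P d ↔ c ∈ P d) := by
    intro c hc hcW
    have := Set.ext_iff.1 (hWa b hb c hc hbW hcW) (Subtype.val ⁻¹' d)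
    simpa only [traceOn, mem_ofPred_eq, hd'] using this
  by_cases hbP : b ∈ P d
  · refine Or.inl (hJ.mem_of_subset _ hW _ fun c hc => ?_)
    by_contra hcW
    exact hc.2 ((hiff c hc.1 hcW).1 hbP)
  · refine Or.inr (hJ.mem_of_subset _ hW _ fun c hc => ?_)
    by_contra hcW
    exact hbP ((hiff c hc.1 hcW).2 hc.2)

theorem decides_of_selects {κ lam : Cardinal.{0}} {J : Set (Set (Set Ordinal.{0}))}
    (hreg : κ.IsRegular) (hkl : κ ≤ lam) (hJ : IsIdealOn J (Pkl κ lam))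
    (hcomp : KappaComplete κ J) (hfine : Ikl κ lam ⊆ J) (h : Selects κ lam J) :
    Decides κ lam J := by
  classical
  have hSL := two_power_lt hreg hkl hJ hcomp hfine (pairHomog_of_selects hreg hkl hJ hcomp h)
  intro A hA P
  have hsm : ∀ a ∈ Pkl κ lam, #(Set (Set a)) < Cardinal.lift.{1} κ := fun a ha =>
    hSL _ (hSL _ ha.2)
  -- the traces on subsets of `a` are coded by ordinals below `κ`
  have hcode : ∀ a : Set Ordinal.{0}, ∃ e : Set (Set a) → Set.Iio κ.ord,
      a ∈ Pkl κ lam → Function.Injective e := by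
    intro a
    by_cases ha : a ∈ Pkl κ lam
    · have hle := (hsm a ha).le
      rw [← mk_Iio_ord_lift] at hle
      obtain ⟨e⟩ := Cardinal.le_def _ _ |>.1 hle
      exact ⟨e, fun _ => e.injective⟩
    · exact ⟨fun _ => ⟨0, hreg.ord_pos⟩, fun h => absurd h ha⟩
  choose e he using hcode
  obtain ⟨B, hB, hBA, g, -, hg⟩ := h A hA (fun a b => (e a (traceOn P a b)).1)
    (fun a b => lt_of_lt_of_le (e a (traceOn P a b)).2
      (ord_le_ord.2 (kappa_le_powerlt hreg hkl)))
    (fun a ha => by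
      have hsub : {o : Ordinal.{0} | ∃ b ∈ A, (e a (traceOn P a b)).1 = o} ⊆
          range fun t => (e a t).1 := by
        rintro _ ⟨b, -, rfl⟩
        exact ⟨_, rfl⟩
      exact ((mk_le_mk_of_subset hsub).trans mk_range_le).trans_lt (hsm a (hA.1 ha)))
  refine ⟨B, hB, hBA, decides_of_trace hJ hfine hB fun a ha => ⟨_, hg a ha, ?_⟩⟩
  intro b hb c hc hbW hcW
  have hb' : (e a (traceOn P a b)).1 = g a := by
    by_contra hno
    exact hbW ⟨hb, hno⟩
  have hc' : (e a (traceOn P a c)).1 = g a := by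
    by_contra hno
    exact hcW ⟨hc, hno⟩
  exact he a (hB.1 ha) (Subtype.ext (hb'.trans hc'.symm))

theorem pairHomog_of_arrow {κ lam : Cardinal.{0}} {J : Set (Set (Set Ordinal.{0}))}
    (hJ : IsIdealOn J (Pkl κ lam)) (h : ArrowN κ lam J 3 2) : PairHomog κ lam J := by
  classical
  intro R
  have h12 : (1 : Ordinal.{0}) < (2 : Cardinal.{0}).ord := by
    rw [lt_ord]
    simp
  obtain ⟨i, -, B, hB, -, Z, hZ, hhom⟩ := h (fun s => if R (s 1) (s 2) then 1 else 0)
    (fun s => by split_ifs; exacts [h12, zero_lt_one.trans h12])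
    (Pkl κ lam) ⟨Subset.rfl, hJ.ground_not_mem⟩
  -- the first coordinate of the triple is a dummy `z`
  obtain ⟨z, hz, -⟩ := exists_diff hJ hB hJ.empty_mem
  have hsub : B \ Z z ∈ plusOf J (Pkl κ lam) := by
    refine ⟨sdiff_subset.trans hB.1, fun hno => hB.2 ?_⟩
    refine hJ.mem_of_subset _ (hJ.union_mem _ hno _ (hZ z hz)) _ fun b hb => ?_
    by_cases hbz : b ∈ Z z
    · exact Or.inr hbz
    · exact Or.inl ⟨hb, hbz⟩
  have hval : ∀ a ∈ B \ Z z, ∀ b ∈ B \ Z z, b ∉ Z a →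
      (if R a b then (1 : Ordinal.{0}) else 0) = i := by
    intro a ha b hb hba
    exact hhom ![z, a, b]
      (by intro m; fin_cases m; exacts [hz, ha.1, hb.1])
      (by
        intro m k hkm
        fin_cases m <;> fin_cases k <;> simp at hkm ⊢
        exacts [ha.2, hb.2, hba])
  refine ⟨_, hsub, ?_⟩
  by_cases hi : i = 1
  · refine Or.inl fun a ha => hJ.mem_of_subset _ (hZ a ha.1) _ ?_
    rintro b ⟨hb, hR⟩
    by_contra hba
    have := hval a ha b hb hba
    rw [if_neg hR, hi] at this
    exact zero_ne_one this
  · refine Or.inr fun a ha => hJ.mem_of_subset _ (hZ a ha.1) _ ?_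
    rintro b ⟨hb, hR⟩
    by_contra hba
    have := hval a ha b hb hba
    rw [if_pos hR] at this
    exact hi this.symm

/-- Colour `(a, b, c)` according to whether `b` and `c` have the same trace on the subsets of `a`.
As there are fewer than `κ` traces, a homogeneous set has the colour "same". -/
theorem decides_of_arrow {κ lam : Cardinal.{0}} {J : Set (Set (Set Ordinal.{0}))}
    (hreg : κ.IsRegular) (hkl : κ ≤ lam) (hJ : IsIdealOn J (Pkl κ lam))
    (hcomp : KappaComplete κ J) (hfine : Ikl κ lam ⊆ J) (h : ArrowN κ lam J 3 2) :
    Decides κ lam J := by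
  classical
  have hSL := two_power_lt hreg hkl hJ hcomp hfine (pairHomog_of_arrow hJ h)
  intro A hA P
  have h12 : (1 : Ordinal.{0}) < (2 : Cardinal.{0}).ord := by
    rw [lt_ord]
    simp
  obtain ⟨i, -, B, hB, hBA, Z, hZ, hhom⟩ := h
    (fun s => if traceOn P (s 0) (s 1) = traceOn P (s 0) (s 2) then 1 else 0)
    (fun s => by split_ifs; exacts [h12, zero_lt_one.trans h12]) A hA
  have hval : ∀ a ∈ B, ∀ b ∈ B, ∀ c ∈ B, b ∉ Z a → c ∉ Z a → c ∉ Z b →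
      (if traceOn P a b = traceOn P a c then (1 : Ordinal.{0}) else 0) = i := by
    intro a ha b hb c hc hba hca hcb
    exact hhom ![a, b, c]
      (by intro m; fin_cases m; exacts [ha, hb, hc])
      (by
        intro m k hkm
        fin_cases m <;> fin_cases k <;> simp at hkm ⊢
        exacts [hba, hca, hcb])
  have hi : i = 1 := by
    obtain ⟨a, ha, -⟩ := exists_diff hJ hB hJ.empty_mem
    obtain ⟨t, ht⟩ := exists_fiber_pos hcomp (hSL _ (hSL _ (hB.1 ha).2)) hB (traceOn P a)
    obtain ⟨b, hb, hba⟩ := exists_diff hJ ht (hZ a ha)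
    obtain ⟨c, hc, hcab⟩ := exists_diff hJ ht (hJ.union_mem _ (hZ a ha) _ (hZ b hb.1))
    have := hval a ha b hb.1 c hc.1 hba (fun h => hcab (Or.inl h)) (fun h => hcab (Or.inr h))
    rw [if_pos (hb.2.trans hc.2.symm)] at this
    exact this.symm
  subst hi
  refine ⟨B, hB, hBA, decides_of_trace hJ hfine hB fun a ha => ?_⟩
  obtain ⟨b, hb, hba⟩ := exists_diff hJ hB (hZ a ha)
  have hone : ∀ c ∈ B, c ∉ Z a ∪ Z b → traceOn P a b = traceOn P a c := by
    intro c hc hcW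
    by_contra hne
    have := hval a ha b hb c hc hba (fun h => hcW (Or.inl h)) (fun h => hcW (Or.inr h))
    rw [if_neg hne] at this
    exact zero_ne_one this
  exact ⟨_, hJ.union_mem _ (hZ a ha) _ (hZ b hb), fun c hc c' hc' hcW hcW' =>
    (hone c hc hcW).symm.trans (hone c' hc' hcW')⟩

theorem arrow_one {κ lam : Cardinal.{0}} {J : Set (Set (Set Ordinal.{0}))}
    (hJ : IsIdealOn J (Pkl κ lam))
    (hcomp : KappaComplete κ J) {ρ : Cardinal.{0}} (hρ : ρ < κ) : ArrowN κ lam J 1 ρ := by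
  intro F hF A hA
  obtain ⟨i, hi⟩ := exists_fiber_pos hcomp (ι := Set.Iio ρ.ord)
    (by rwa [mk_Iio_ord_lift, Cardinal.lift_lt]) hA fun a => ⟨F fun _ => a, hF _⟩
  refine ⟨i, i.2, _, hi, fun a ha => ha.1, fun _ => ∅, fun _ _ => hJ.empty_mem, ?_⟩
  intro s hs _
  have := congrArg Subtype.val (hs 0).2
  simp only at this
  rw [← this]
  congr 1
  funext m
  rw [Subsingleton.elim m 0]

/-- Fix the last coordinate modulo `J` as a function of the first `n` and apply the relation for
`n`-tuples. The exceptional sets of the fewer than `κ` many `n`-tuples of subsets of `a` are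
absorbed into `Z a`; this catches all relevant tuples, as `Z` also forces them to be
`⊆`-increasing. -/
theorem arrow_succ {κ lam : Cardinal.{0}} {J : Set (Set (Set Ordinal.{0}))}
    (hreg : κ.IsRegular) (hkl : κ ≤ lam) (hJ : IsIdealOn J (Pkl κ lam))
    (hcomp : KappaComplete κ J) (hfine : Ikl κ lam ⊆ J) (h : Decides κ lam J)
    (hSL : ∀ ι : Type 1, #ι < Cardinal.lift.{1} κ → #(Set ι) < Cardinal.lift.{1} κ)
    {ρ : Cardinal.{0}} (hρ : ρ < κ) {n : ℕ} (hn : ArrowN κ lam J (n + 1) ρ) :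
    ArrowN κ lam J (n + 2) ρ := by
  intro F hF A hA
  have hρ0 : 0 < ρ.ord := lt_of_le_of_lt zero_le (hF fun _ => ∅)
  have hinf := aleph0_le_mk_Pkl hreg hkl
  have hκ' : ℵ₀ ≤ Cardinal.lift.{1} κ := by simpa using hreg.aleph0_le
  obtain ⟨B, hB, hBA, hdec⟩ := h.family (T := (Fin (n + 1) → Pkl κ lam) × Set.Iio ρ.ord)
    (by
      have h1 : #(Set.Iio ρ.ord) ≤ #(Pkl κ lam) := by
        rw [mk_Iio_ord_lift, mk_Pkl hreg hkl, Cardinal.lift_le]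
        exact hρ.le.trans (kappa_le_powerlt hreg hkl)
      have h2 : #(Fin (n + 1) → Pkl κ lam) ≤ #(Pkl κ lam) := by
        rw [mk_arrow, mk_fin, Cardinal.lift_uzero, Cardinal.lift_natCast, power_natCast]
        exact power_nat_le hinf
      rw [mk_prod, Cardinal.lift_id, Cardinal.lift_id]
      exact (mul_le_mul' h2 h1).trans (mul_eq_self hinf).le) hA
    fun t => {c | F (Fin.snoc (fun k => (t.1 k).1) c) = t.2}
  have key : ∀ s : Fin (n + 1) → Set Ordinal.{0}, ∃ o, o < ρ.ord ∧
      ((∀ k, s k ∈ Pkl κ lam) → {c | c ∈ B ∧ F (Fin.snoc s c) ≠ o} ∈ J) := by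
    intro s
    by_cases hs : ∀ k, s k ∈ Pkl κ lam
    · obtain ⟨o, ho, hoJ⟩ := exists_const_of_decides hcomp hB (fun c => F (Fin.snoc s c))
        (V := Set.Iio ρ.ord) (by rwa [mk_Iio_ord_lift, Cardinal.lift_lt]) (fun b _ => hF _)
        (fun o ho => hdec (fun k => ⟨s k, hs k⟩, ⟨o, ho⟩))
      exact ⟨o, ho, fun _ => hoJ⟩
    · exact ⟨0, hρ0, fun h => absurd h hs⟩
  choose G hGρ hG using key
  obtain ⟨i, hi, B', hB', hBB', Z, hZ, hhom⟩ := hn G hGρ B hB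
  let W : Set Ordinal.{0} → Set (Set Ordinal.{0}) := fun a =>
    ⋃ t : Fin (n + 1) → Set a,
      {c | c ∈ B ∧ F (Fin.snoc (fun k => Subtype.val '' t k) c) ≠
        G fun k => Subtype.val '' t k}
  have hW : ∀ a ∈ Pkl κ lam, W a ∈ J := by
    intro a ha
    refine iUnion_mem_ideal hcomp ?_ _ fun t => hG _ fun k => ?_
    · have hlt := hSL (Fin (n + 1) × a) (by
        rw [mk_prod, mk_fin]
        refine mul_lt_of_lt hκ' (lt_of_lt_of_le ?_ hκ') ?_
        · rw [Cardinal.lift_natCast]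
          exact natCast_lt_aleph0
        · simpa using ha.2)
      refine lt_of_le_of_lt ?_ hlt
      refine mk_le_of_injective (f := fun t => {p | p.2 ∈ t p.1}) fun t t' htt => ?_
      funext k
      ext y
      exact Set.ext_iff.1 htt (k, y)
    · have hsub : Subtype.val '' t k ⊆ a := by
        rintro _ ⟨y, -, rfl⟩
        exact y.2
      exact ⟨hsub.trans ha.1, (mk_le_mk_of_subset hsub).trans_lt ha.2⟩
  refine ⟨i, hi, B', hB', hBB'.trans hBA,
    fun a => Z a ∪ ({b | b ∈ Pkl κ lam ∧ ¬ a ⊆ b} ∪ W a), fun a ha =>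
      hJ.union_mem _ (hZ a ha) _ (hJ.union_mem _ (not_superset_mem hfine (hB'.1 ha)) _
        (hW a (hB'.1 ha))), ?_⟩
  intro s hs hsZ
  have hinit : G (Fin.init s) = i := by
    refine hhom _ (fun m => hs _) fun m k hkm hmem => ?_
    exact hsZ m.castSucc k.castSucc (by simpa using hkm) (Or.inl hmem)
  rw [← hinit]
  -- `a` is the largest of the first `n + 1` entries of `s`
  set a := s (Fin.last n).castSucc with ha
  have hsuba : ∀ k : Fin (n + 1), s k.castSucc ⊆ a := by
    intro k
    rcases eq_or_lt_of_le (Fin.le_last k) with rfl | hlt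
    · exact Subset.rfl
    · by_contra hno
      exact hsZ (Fin.last n).castSucc k.castSucc (by simpa using hlt)
        (Or.inr (Or.inl ⟨hB'.1 (hs _), hno⟩))
  by_contra hne
  refine hsZ (Fin.last (n + 1)) (Fin.last n).castSucc (Fin.castSucc_lt_last _)
    (Or.inr (Or.inr ?_))
  refine mem_iUnion.2 ⟨fun k => Subtype.val ⁻¹' s k.castSucc, hBB' (hs _), ?_⟩
  have heq : (fun k : Fin (n + 1) =>
      Subtype.val '' (Subtype.val ⁻¹' s k.castSucc : Set a)) = Fin.init s := by
    funext k
    rw [Subtype.image_preimage_coe, inter_eq_right.2 (hsuba k)]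
    rfl
  rw [heq, Fin.snoc_init_self]
  exact hne

/-- for a `κ`-complete fine ideal `J` on `P_κ(λ)`, the
following are equivalent: (i) `J` is `(λ^{<κ}, 2)`-distributive; (ii) the
selection property for colorings `F : A × A → λ^{<κ}` with small fibers;
(iii) `J⁺ →_J (J⁺)ⁿ_ρ` for all `2 ≤ n < ω`, `0 < ρ < κ`;
(iv) `J⁺ →_J (J⁺)³₂`. -/
theorem stmt18 (κ lam : Cardinal.{0}) (hreg : κ.IsRegular) (hunc : ℵ₀ < κ)
    (hkl : κ ≤ lam)
    (J : Set (Set (Set Ordinal.{0}))) (hJ : IsIdealOn J (Pkl κ lam))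
    (hcomp : KappaComplete κ J) (hfine : Ikl κ lam ⊆ J) :
    List.TFAE
      [DistrPkl κ lam J (Cardinal.powerlt lam κ) 2,
        ∀ A ∈ plusOf J (Pkl κ lam),
          ∀ F : Set Ordinal.{0} → Set Ordinal.{0} → Ordinal.{0},
            (∀ a b, F a b < (Cardinal.powerlt lam κ).ord) →
            (∀ a ∈ A, #{o : Ordinal.{0} | ∃ b ∈ A, F a b = o} <
              Cardinal.lift.{1} κ) →
            ∃ B ∈ plusOf J (Pkl κ lam), B ⊆ A ∧
              ∃ h : Set Ordinal.{0} → Ordinal.{0},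
                (∀ a ∈ B, h a < (Cardinal.powerlt lam κ).ord) ∧
                ∀ a ∈ B, {b | b ∈ B ∧ F a b ≠ h a} ∈ J,
        ∀ n : ℕ, 2 ≤ n → ∀ ρ : Cardinal.{0}, 0 < ρ → ρ < κ → ArrowN κ lam J n ρ,
        ArrowN κ lam J 3 2] := by
  have h12 : DistrPkl κ lam J (Cardinal.powerlt lam κ) 2 → Selects κ lam J := fun h =>
    selects_of_decides hreg hkl hcomp (decides_of_distr hreg hkl hJ h)
  tfae_have 1 → 2 := h12
  tfae_have 2 → 1 := fun h =>
    distr_of_decides hreg hkl hJ (decides_of_selects hreg hkl hJ hcomp hfine h)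
  tfae_have 1 → 3 := by
    intro h n hn ρ _ hρ
    have hSL := two_power_lt hreg hkl hJ hcomp hfine
      (pairHomog_of_selects hreg hkl hJ hcomp (h12 h))
    have key : ∀ m, ArrowN κ lam J (m + 1) ρ := by
      intro m
      induction m with
      | zero => exact arrow_one hJ hcomp hρ
      | succ m ih =>
        exact arrow_succ hreg hkl hJ hcomp hfine (decides_of_distr hreg hkl hJ h) hSL hρ ih
    obtain ⟨m, rfl⟩ := Nat.exists_eq_add_of_le' (one_le_two.trans hn)
    exact key m
  tfae_have 3 → 4 := fun h => h 3 (by norm_num) 2 (by norm_num) (by exact_mod_cast hreg.nat_lt 2)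
  tfae_have 4 → 1 := fun h =>
    distr_of_decides hreg hkl hJ (decides_of_arrow hreg hkl hJ hcomp hfine h)
  tfae_finish
end
end
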